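/- For the map f, for every p̄ ∈ S the basin of attraction 𝒢(ν_p̄) = {x ∈ [0,1] : e_n(x) converges in the weak* topology to ν_p̄} has Hausdorff dimension 1. -/

import Mathlib

open MeasureTheory Filter Topology Set
open scoped ENNReal

noncomputable section

/-- The interval map `f` of Serre–Yang type: `f(x) = x + 18x³` on `[0,1/3]`,
`f(x) = x + 72(x − 1/2)³` on `(1/3,2/3)` and `f(x) = x + 18(x − 1)³` on `[2/3,1]`. -/
def theMap : ℝ → ℝ := fun x =>
  if x ≤ 1 / 3 then x + 18 * x ^ 3
  else if x < 2 / 3 then x + 72 * (x - 1 / 2) ^ 3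
  else x + 18 * (x - 1) ^ 3

/-- The three neutral fixed points `0`, `1/2`, `1`. -/
def theFixedPts : Fin 3 → ℝ := ![0, 1 / 2, 1]

/-- The `n`-th empirical measure `e_n(x) = (1/n) ∑_{k<n} δ_{f^k x}`. -/
def empMeasure (f : ℝ → ℝ) (n : ℕ) (x : ℝ) : Measure ℝ :=
  (n : ℝ≥0∞)⁻¹ • ∑ k ∈ Finset.range n, Measure.dirac (f^[k] x)

/-- Weak* convergence of a sequence of measures, tested against bounded continuous functions. -/
def WeakTendsto (μ : ℕ → Measure ℝ) (ν : Measure ℝ) : Prop :=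
  ∀ g : BoundedContinuousFunction ℝ ℝ,
    Tendsto (fun n => ∫ y, g y ∂(μ n)) atTop (𝓝 (∫ y, g y ∂ν))

/-- `V(x)`: the set of weak* limit points of `(e_n(x))_{n ≥ 1}`. -/
def Vset (f : ℝ → ℝ) (x : ℝ) : Set (Measure ℝ) :=
  {ν | ∃ φ : ℕ → ℕ, StrictMono φ ∧ WeakTendsto (fun k => empMeasure f (φ k + 1) x) ν}

/-- The simplex `S = {p̄ ∈ [0,1]³ : p₁ + p₂ + p₃ = 1}`. -/
def simplexS : Set (Fin 3 → ℝ) :=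
  {p | (∀ i, p i ∈ Set.Icc (0:ℝ) 1) ∧ ∑ i, p i = 1}

/-- The measure `ν_p̄ = p₁ δ_0 + p₂ δ_{1/2} + p₃ δ_1`. -/
def nuMeasure (p : Fin 3 → ℝ) : Measure ℝ :=
  ∑ j, ENNReal.ofReal (p j) • Measure.dirac (theFixedPts j)

namespace Bas

/-- The model cubic. -/
def cub (u : ℝ) : ℝ := u + 18 * u ^ 3

lemma cub_sub (u v : ℝ) : cub v - cub u = (v - u) * (1 + 18 * (u ^ 2 + u * v + v ^ 2)) := by
  unfold cub; ring

lemma cub_strictMono : StrictMono cub := by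
  intro u v h
  have := cub_sub u v
  have h2 : 0 < (v - u) * (1 + 18 * (u ^ 2 + u * v + v ^ 2)) := by
    apply mul_pos (by linarith)
    nlinarith [sq_nonneg (u + v), sq_nonneg u, sq_nonneg v]
  linarith

lemma cub_continuous : Continuous cub := by unfold cub; fun_prop

lemma cub_surj : Function.Surjective cub := by
  intro y
  have h := intermediate_value_Icc (f := cub) (a := -|y|) (b := |y|)
    (by linarith [abs_nonneg y]) cub_continuous.continuousOn
  have h1 : y ∈ Icc (cub (-|y|)) (cub |y|) := by
    have := abs_nonneg y
    have h3 : 0 ≤ |y| ^ 3 := by positivity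
    constructor
    · have := neg_abs_le y
      unfold cub; nlinarith
    · have := le_abs_self y
      unfold cub; nlinarith
  obtain ⟨x, -, hx⟩ := h h1
  exact ⟨x, hx⟩

def cubIso : ℝ ≃o ℝ := cub_strictMono.orderIsoOfSurjective cub cub_surj

/-- The inverse of the model cubic. -/
def q (u : ℝ) : ℝ := cubIso.symm u

lemma cub_q (u : ℝ) : cub (q u) = u := cubIso.apply_symm_apply u
lemma q_cub (u : ℝ) : q (cub u) = u := cubIso.symm_apply_apply u
lemma q_strictMono : StrictMono q := cubIso.symm.strictMono
lemma q_continuous : Continuous q := cubIso.symm.continuous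
lemma q_of (u v : ℝ) (h : cub u = v) : q v = u := by rw [← h, q_cub]
lemma q_zero : q 0 = 0 := q_of _ _ (by norm_num [cub])
lemma q_one : q 1 = 1 / 3 := q_of _ _ (by norm_num [cub])
lemma q_neg (u : ℝ) : q (-u) = - q u := q_of _ _ (by
  have := cub_q u
  unfold cub at *; linarith [this, show (-q u)^3 = -(q u)^3 by ring])

lemma q_eq (u : ℝ) : q u * (1 + 18 * q u ^ 2) = u := by
  have := cub_q u
  unfold cub at this; linarith

lemma q_sub (u v : ℝ) : (q v - q u) * (1 + 18 * (q u ^ 2 + q u * q v + q v ^ 2)) = v - u := by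
  have := cub_sub (q u) (q v)
  rw [cub_q, cub_q] at this; linarith

lemma q_sq_le (u : ℝ) : q u ^ 2 ≤ u ^ 2 := by
  have h := q_eq u
  have : u ^ 2 = q u ^ 2 * (1 + 18 * q u ^ 2) ^ 2 := by rw [← mul_pow, h]
  rw [this]
  have h2 : 0 ≤ q u ^ 2 := sq_nonneg _
  nlinarith [mul_nonneg h2 h2, mul_nonneg h2 (mul_nonneg h2 h2)]

lemma q_sq_le_ninth {u : ℝ} (hu : u ^ 2 ≤ 1) : q u ^ 2 ≤ 1 / 9 := by
  have hu := abs_le_one_iff_mul_self_le_one.mpr (by nlinarith : u * u ≤ 1)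
  rw [abs_le] at hu
  have h1 : q u ≤ 1 / 3 := by rw [← q_one]; exact q_strictMono.monotone hu.2
  have h2 : -(1 / 3) ≤ q u := by rw [← q_one, ← q_neg]; exact q_strictMono.monotone hu.1
  nlinarith

lemma q_third : (1 : ℝ) / 6 ≤ q (1 / 3) := by
  rw [← q_cub (1/6)]; apply q_strictMono.monotone; norm_num [cub]

/-- difference, lower bound -/
lemma q_sub_ge {u v M : ℝ} (huv : u ≤ v) (hu : q u ^ 2 ≤ M) (hv : q v ^ 2 ≤ M) :
    v - u ≤ (q v - q u) * (1 + 54 * M) := by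
  rw [← q_sub u v]
  have := q_strictMono.monotone huv
  apply mul_le_mul_of_nonneg_left _ (by linarith)
  nlinarith [sq_nonneg (q u - q v)]

lemma q_sub_le {u v : ℝ} (huv : u ≤ v) : q v - q u ≤ v - u := by
  have := q_strictMono.monotone huv
  have h := q_sub u v
  nlinarith [mul_nonneg (by linarith : 0 ≤ q v - q u)
    (by nlinarith [sq_nonneg (q u + q v), sq_nonneg (q u), sq_nonneg (q v)] :
      0 ≤ q u ^ 2 + q u * q v + q v ^ 2)]

lemma q_sub_le_pos {u v : ℝ} (huv : u ≤ v) (hu : 1 / 3 ≤ u) : q v - q u ≤ 2 / 5 * (v - u) := by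
  have h0 := q_strictMono.monotone huv
  have h1 : 1 / 6 ≤ q u := q_third.trans (q_strictMono.monotone hu)
  have h := q_sub u v
  nlinarith [mul_nonneg (by linarith : 0 ≤ q v - q u)
    (by nlinarith [mul_nonneg (sub_nonneg.2 h1) (sub_nonneg.2 (h1.trans h0))] :
      0 ≤ q u ^ 2 + q u * q v + q v ^ 2 - 1 / 12)]

lemma q_sub_le_neg {u v : ℝ} (huv : u ≤ v) (hv : v ≤ - (1 / 3)) : q v - q u ≤ 2 / 5 * (v - u) := by
  have := q_sub_le_pos (u := -v) (v := -u) (by linarith) (by linarith)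
  rw [q_neg, q_neg] at this; linarith

/-- iterates -/
lemma q_iter_sq {u : ℝ} (hu : u ^ 2 ≤ 1) (r : ℕ) : q^[r] u ^ 2 ≤ 1 := by
  induction r with
  | zero => exact hu
  | succ r ih =>
    rw [Function.iterate_succ_apply']
    exact (q_sq_le _).trans ih

lemma q_iter_bound {u : ℝ} (hu : u ^ 2 ≤ 1) (r : ℕ) : r * q^[r] u ^ 2 ≤ 1 / 9 := by
  induction r with
  | zero => norm_num
  | succ r ih =>
    rw [Function.iterate_succ_apply']
    have h1 := q_iter_sq hu r
    set y := q^[r] u with hy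
    have h9 := q_sq_le_ninth h1
    have h := q_eq y
    have h2 : y ^ 2 = q y ^ 2 * (1 + 18 * q y ^ 2) ^ 2 := by rw [← mul_pow, h]
    rw [h2] at ih
    rcases Nat.eq_zero_or_pos r with h0 | h0
    · subst h0; norm_num; linarith
    have hr : (1 : ℝ) ≤ r := by exact_mod_cast h0
    push_cast
    set t := q y ^ 2 with ht
    have ht0 : 0 ≤ t := sq_nonneg _
    by_contra hc
    push Not at hc
    -- t > 1/(9(r+1))
    have h3 : (r : ℝ) * (t * (1 + 36 * t)) ≤ 1 / 9 := by
      refine le_trans ?_ ih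
      apply mul_le_mul_of_nonneg_left _ (by linarith)
      apply mul_le_mul_of_nonneg_left _ ht0
      nlinarith
    have h4 : 1 / 9 < t * (r + 1) := by linarith
    have h5 : t * (36 * r * t) ≤ t := by nlinarith
    rcases ht0.eq_or_lt with h6 | h6
    · rw [← h6] at h4; linarith
    have h7 : 36 * r * t ≤ 1 := by
      by_contra h8
      push Not at h8
      nlinarith
    nlinarith

lemma q_iter_sub {u v : ℝ} (huv : u ≤ v) (hu : u ^ 2 ≤ 1) (hv : v ^ 2 ≤ 1) (r : ℕ) :
    v - u ≤ (q^[r] v - q^[r] u) * ((r : ℝ) + 1) ^ 6 := by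
  induction r with
  | zero => simp
  | succ r ih =>
    refine ih.trans ?_
    have hmono : q^[r] u ≤ q^[r] v := q_strictMono.monotone.iterate r huv
    have h1 : ∀ w : ℝ, w ^ 2 ≤ 1 → q (q^[r] w) ^ 2 ≤ 1 / 9 / (r + 1) := by
      intro w hw
      have := q_iter_bound hw (r + 1)
      rw [Function.iterate_succ_apply'] at this
      rw [le_div_iff₀ (by positivity)]
      push_cast at this; linarith
    have h2 := q_sub_ge hmono (h1 u hu) (h1 v hv)
    rw [Function.iterate_succ_apply', Function.iterate_succ_apply']
    have h3 : q (q^[r] u) ≤ q (q^[r] v) := q_strictMono.monotone hmono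
    calc (q^[r] v - q^[r] u) * ((r : ℝ) + 1) ^ 6
        ≤ ((q (q^[r] v) - q (q^[r] u)) * (1 + 54 * (1 / 9 / (r + 1)))) * ((r : ℝ) + 1) ^ 6 := by
          gcongr
      _ = (q (q^[r] v) - q (q^[r] u)) * ((1 + 54 * (1 / 9 / (r + 1))) * ((r : ℝ) + 1) ^ 6) := by ring
      _ ≤ _ := by
          apply mul_le_mul_of_nonneg_left _ (by linarith)
          have : (1 + 54 * (1 / 9 / ((r:ℝ) + 1))) * ((r : ℝ) + 1) ^ 6
              = ((r:ℝ) + 1) ^ 6 + 6 * ((r:ℝ) + 1) ^ 5 := by field_simp; ring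
          rw [this]
          push_cast
          have hr : (0:ℝ) ≤ r := by positivity
          have h0 : (0:ℝ) ≤ r + 1 := by positivity
          generalize (r:ℝ) + 1 = a at *
          have : (a + 1) ^ 6 = a ^ 6 + 6 * a ^ 5 + (15 * a ^ 4 + 20 * a ^ 3 + 15 * a ^ 2 + 6 * a + 1) := by
            ring
          rw [this]
          have : 0 ≤ 15 * a ^ 4 + 20 * a ^ 3 + 15 * a ^ 2 + 6 * a + 1 := by positivity
          linarith

lemma q_hasDerivAt (u : ℝ) : HasDerivAt q (1 / (1 + 54 * q u ^ 2)) u := by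
  have h : HasDerivAt cub (1 + 54 * q u ^ 2) (q u) := by
    unfold cub
    have h1 := (hasDerivAt_id (q u)).add (((hasDerivAt_id (q u)).pow 3).const_mul 18)
    refine h1.congr_deriv ?_
    norm_num
    ring
  have := HasDerivAt.of_local_left_inverse (f := cub) (g := q) (a := u)
    q_continuous.continuousAt h (by positivity) (Eventually.of_forall cub_q)
  simpa using this

end Bas

namespace Bas

def sc : Fin 3 → ℝ := ![1, 1 / 2, 1]

lemma sc_pos (j : Fin 3) : 0 < sc j := by fin_cases j <;> norm_num [sc]
lemma sc_le (j : Fin 3) : sc j ≤ 1 := by fin_cases j <;> norm_num [sc]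

/-- normalizing coordinate -/
def nc (j : Fin 3) (x : ℝ) : ℝ := (x - theFixedPts j) / sc j

/-- inverse branches -/
def g (j : Fin 3) (x : ℝ) : ℝ := theFixedPts j + sc j * q (nc j x)

lemma nc_sub (j : Fin 3) (x y : ℝ) : nc j y - nc j x = (y - x) / sc j := by
  unfold nc; ring

lemma nc_mono (j : Fin 3) {x y : ℝ} (h : x ≤ y) : nc j x ≤ nc j y := by
  unfold nc
  have := sc_pos j
  gcongr

lemma nc_sq (j : Fin 3) {x : ℝ} (hx : x ∈ Icc (0:ℝ) 1) : nc j x ^ 2 ≤ 1 := by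
  obtain ⟨h0, h1⟩ := hx
  fin_cases j <;> norm_num [nc, sc, theFixedPts] <;> rw [abs_le] <;> constructor <;> linarith

lemma nc_g (j : Fin 3) (x : ℝ) : nc j (g j x) = q (nc j x) := by
  have := (sc_pos j).ne'
  change (theFixedPts j + sc j * q (nc j x) - theFixedPts j) / sc j = _
  rw [add_sub_cancel_left, mul_div_cancel_left₀ _ this]

lemma eq_nc (j : Fin 3) (x : ℝ) : x = theFixedPts j + sc j * nc j x := by
  have := (sc_pos j).ne'
  unfold nc; field_simp; ring

lemma nc_iter (j : Fin 3) (x : ℝ) (a : ℕ) : nc j ((g j)^[a] x) = q^[a] (nc j x) := by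
  induction a with
  | zero => rfl
  | succ a ih => rw [Function.iterate_succ_apply', Function.iterate_succ_apply', nc_g, ih]

lemma g_iter (j : Fin 3) (x : ℝ) (a : ℕ) :
    (g j)^[a] x = theFixedPts j + sc j * q^[a] (nc j x) := by
  rw [← nc_iter]; exact eq_nc _ _

lemma g_sub (j : Fin 3) (x y : ℝ) : g j y - g j x = sc j * (q (nc j y) - q (nc j x)) := by
  unfold g; ring

lemma g_strictMono (j : Fin 3) : StrictMono (g j) := by
  intro x y h
  have hs := sc_pos j
  have : nc j x < nc j y := by unfold nc; gcongr
  have := q_strictMono this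
  unfold g; gcongr

lemma g_continuous (j : Fin 3) : Continuous (g j) := by
  unfold g nc
  have := q_continuous
  fun_prop

lemma g_zero (j : Fin 3) : g j 0 = (j : ℕ) / 3 := by
  fin_cases j
  · norm_num [g, nc, theFixedPts, sc, q_zero]
  · norm_num [g, nc, theFixedPts, sc, q_neg, q_one]
  · norm_num [g, nc, theFixedPts, sc, q_neg, q_one]

lemma g_one (j : Fin 3) : g j 1 = ((j : ℕ) + 1) / 3 := by
  fin_cases j
  · norm_num [g, nc, theFixedPts, sc, q_one]
  · norm_num [g, nc, theFixedPts, sc, q_one]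
  · norm_num [g, nc, theFixedPts, sc, q_zero]

lemma g_mem_I (j : Fin 3) {x : ℝ} (hx : x ∈ Icc (0:ℝ) 1) :
    g j x ∈ Icc (((j : ℕ) : ℝ) / 3) (((j : ℕ) + 1) / 3) := by
  rw [← g_zero, ← g_one]
  exact ⟨(g_strictMono j).monotone hx.1, (g_strictMono j).monotone hx.2⟩

lemma g_mem (j : Fin 3) {x : ℝ} (hx : x ∈ Icc (0:ℝ) 1) : g j x ∈ Icc (0:ℝ) 1 := by
  have := g_mem_I j hx
  have hj : ((j : ℕ) : ℝ) ≤ 2 := by exact_mod_cast Nat.lt_succ_iff.mp j.2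
  exact ⟨le_trans (by positivity) this.1, this.2.trans (by linarith)⟩

lemma g_mem_I' (j : Fin 3) {x : ℝ} (hx : x ∈ Ioo (0:ℝ) 1) :
    g j x ∈ Ioo (((j : ℕ) : ℝ) / 3) (((j : ℕ) + 1) / 3) := by
  rw [← g_zero, ← g_one]
  exact ⟨g_strictMono j hx.1, g_strictMono j hx.2⟩

lemma g_mem' (j : Fin 3) {x : ℝ} (hx : x ∈ Ioo (0:ℝ) 1) : g j x ∈ Ioo (0:ℝ) 1 := by
  have := g_mem_I' j hx
  have hj : ((j : ℕ) : ℝ) ≤ 2 := by exact_mod_cast Nat.lt_succ_iff.mp j.2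
  exact ⟨lt_of_le_of_lt (by positivity) this.1, this.2.trans_le (by linarith)⟩

lemma theMap_g (j : Fin 3) {x : ℝ} (hx : x ∈ Ioo (0:ℝ) 1) : theMap (g j x) = x := by
  have h := g_mem_I' j hx
  have hc := q_eq (nc j x)
  have hn := eq_nc j x
  have hg : g j x = theFixedPts j + sc j * q (nc j x) := rfl
  unfold theMap
  fin_cases j
  · norm_num at h
    rw [if_pos (by norm_num; linarith [h.2])]
    rw [hg]; conv_rhs => rw [hn, ← hc]
    simp [theFixedPts, sc]; ring
  · norm_num at h
    rw [if_neg (by norm_num; linarith [h.1]), if_pos (by norm_num; linarith [h.2])]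
    rw [hg]; conv_rhs => rw [hn, ← hc]
    simp [theFixedPts, sc]; ring
  · norm_num at h
    rw [if_neg (by norm_num; linarith [h.1]), if_neg (by norm_num; linarith [h.1])]
    rw [hg]; conv_rhs => rw [hn, ← hc]
    simp [theFixedPts, sc]; ring

lemma g_sub_ge (j : Fin 3) {x y : ℝ} (hx : x ∈ Icc (0:ℝ) 1) (hy : y ∈ Icc (0:ℝ) 1) (h : x ≤ y) :
    1 / 7 * (y - x) ≤ g j y - g j x := by
  have h1 := q_sub_ge (nc_mono j h) (q_sq_le_ninth (nc_sq j hx)) (q_sq_le_ninth (nc_sq j hy))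
  rw [nc_sub, div_le_iff₀ (sc_pos j)] at h1
  rw [g_sub]; linarith

lemma g_sub_le (j : Fin 3) {x y : ℝ} (h : x ≤ y) : g j y - g j x ≤ y - x := by
  have h1 := q_sub_le (nc_mono j h)
  rw [nc_sub, le_div_iff₀ (sc_pos j)] at h1
  rw [g_sub]; linarith

/-- points of the `b`-th branch interval are away from the `j`-th fixed point -/
lemma nc_far (j b : Fin 3) (hjb : j ≠ b) :
    (∀ x ∈ Icc (((b : ℕ) : ℝ) / 3) (((b : ℕ) + 1) / 3), 1 / 3 ≤ nc j x) ∨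
    (∀ x ∈ Icc (((b : ℕ) : ℝ) / 3) (((b : ℕ) + 1) / 3), nc j x ≤ - (1 / 3)) := by
  fin_cases j <;> fin_cases b <;> first | (exact absurd rfl hjb) | skip
  · left; rintro x ⟨h0, h1⟩; norm_num [nc, theFixedPts, sc] at *; linarith
  · left; rintro x ⟨h0, h1⟩; norm_num [nc, theFixedPts, sc] at *; linarith
  · right; rintro x ⟨h0, h1⟩; norm_num [nc, theFixedPts, sc] at *; linarith
  · left; rintro x ⟨h0, h1⟩; norm_num [nc, theFixedPts, sc] at *; linarith
  · right; rintro x ⟨h0, h1⟩; norm_num [nc, theFixedPts, sc] at *; linarith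
  · right; rintro x ⟨h0, h1⟩; norm_num [nc, theFixedPts, sc] at *; linarith

lemma g_sub_le' (j b : Fin 3) (hjb : j ≠ b) {x y : ℝ} (h : x ≤ y)
    (hx : x ∈ Icc (((b : ℕ) : ℝ) / 3) (((b : ℕ) + 1) / 3))
    (hy : y ∈ Icc (((b : ℕ) : ℝ) / 3) (((b : ℕ) + 1) / 3)) :
    g j y - g j x ≤ 2 / 5 * (y - x) := by
  have h1 : q (nc j y) - q (nc j x) ≤ 2 / 5 * (nc j y - nc j x) := by
    rcases nc_far j b hjb with hf | hf
    · exact q_sub_le_pos (nc_mono j h) (hf x hx)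
    · exact q_sub_le_neg (nc_mono j h) (hf y hy)
  rw [nc_sub, ← mul_div_assoc, le_div_iff₀ (sc_pos j)] at h1
  rw [g_sub]; linarith

/-- word maps -/
def GW (w : List (Fin 3)) (x : ℝ) : ℝ := w.foldr g x

@[simp] lemma GW_nil (x : ℝ) : GW [] x = x := rfl
@[simp] lemma GW_cons (j : Fin 3) (w : List (Fin 3)) (x : ℝ) : GW (j :: w) x = g j (GW w x) := rfl
lemma GW_append (u w : List (Fin 3)) (x : ℝ) : GW (u ++ w) x = GW u (GW w x) := by
  simp [GW]

lemma GW_replicate (a : ℕ) (j : Fin 3) (x : ℝ) : GW (List.replicate a j) x = (g j)^[a] x := by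
  induction a with
  | zero => rfl
  | succ a ih => rw [List.replicate_succ, GW_cons, ih, Function.iterate_succ_apply']

lemma GW_strictMono (w : List (Fin 3)) : StrictMono (GW w) := by
  induction w with
  | nil => intro x y h; simpa
  | cons j w ih => intro x y h; exact g_strictMono j (ih h)

lemma GW_continuous (w : List (Fin 3)) : Continuous (GW w) := by
  induction w with
  | nil => exact continuous_id
  | cons j w ih => exact (g_continuous j).comp ih

lemma GW_mem (w : List (Fin 3)) {x : ℝ} (hx : x ∈ Icc (0:ℝ) 1) : GW w x ∈ Icc (0:ℝ) 1 := by
  induction w with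
  | nil => simpa
  | cons j w ih => exact g_mem j ih

lemma GW_mem' (w : List (Fin 3)) {x : ℝ} (hx : x ∈ Ioo (0:ℝ) 1) : GW w x ∈ Ioo (0:ℝ) 1 := by
  induction w with
  | nil => simpa
  | cons j w ih => exact g_mem' j ih

lemma map_GW (w : List (Fin 3)) {x : ℝ} (hx : x ∈ Ioo (0:ℝ) 1) :
    theMap^[w.length] (GW w x) = x := by
  induction w with
  | nil => rfl
  | cons j w ih =>
    rw [List.length_cons, Function.iterate_succ_apply, GW_cons, theMap_g j (GW_mem' w hx), ih]

/-- Lower Lipschitz bound on the unit interval. -/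
def LL (c : ℝ) (E : ℝ → ℝ) : Prop :=
  ∀ x y, x ∈ Icc (0:ℝ) 1 → y ∈ Icc (0:ℝ) 1 → x ≤ y → c * (y - x) ≤ E y - E x

lemma LL_append {c d : ℝ} {u w : List (Fin 3)} (hc : 0 ≤ c) (hu : LL c (GW u)) (hw : LL d (GW w)) :
    LL (c * d) (GW (u ++ w)) := by
  intro x y hx hy h
  rw [GW_append, GW_append]
  have h1 := hu _ _ (GW_mem w hx) (GW_mem w hy) ((GW_strictMono w).monotone h)
  have h2 := hw _ _ hx hy h
  calc c * d * (y - x) = c * (d * (y - x)) := by ring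
    _ ≤ c * (GW w y - GW w x) := by gcongr
    _ ≤ _ := h1

lemma LL_nil : LL 1 (GW []) := by intro x y _ _ _; simp

lemma LL_single (j : Fin 3) : LL (1 / 7) (GW [j]) := by
  intro x y hx hy h
  exact g_sub_ge j hx hy h

lemma LL_replicate (a : ℕ) (j : Fin 3) : LL (1 / ((a : ℝ) + 1) ^ 6) (GW (List.replicate a j)) := by
  intro x y hx hy h
  rw [GW_replicate, GW_replicate, g_iter, g_iter]
  have h1 := q_iter_sub (nc_mono j h) (nc_sq j hx) (nc_sq j hy) a
  rw [nc_sub, div_le_iff₀ (sc_pos j)] at h1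
  rw [one_div_mul_eq_div, div_le_iff₀ (by positivity)]
  linarith

lemma replicate_close (a : ℕ) (j : Fin 3) {x : ℝ} (hx : x ∈ Icc (0:ℝ) 1) :
    a * (GW (List.replicate a j) x - theFixedPts j) ^ 2 ≤ 1 / 9 := by
  rw [GW_replicate, g_iter]
  have h1 := q_iter_bound (nc_sq j hx) a
  have h2 := sc_le j
  have h3 := sc_pos j
  refine le_trans ?_ h1
  apply mul_le_mul_of_nonneg_left _ (by positivity)
  rw [add_sub_cancel_left, mul_pow]
  apply mul_le_of_le_one_left (sq_nonneg _)
  nlinarith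

/-- cylinder length -/
def ell (w : List (Fin 3)) : ℝ := GW w 1 - GW w 0

lemma ell_pos (w : List (Fin 3)) : 0 < ell w := by
  have := GW_strictMono w (zero_lt_one)
  unfold ell; linarith

lemma ell_split (w : List (Fin 3)) : ell w = ∑ b, ell (w ++ [b]) := by
  simp only [ell, GW_append, Fin.sum_univ_three, GW_cons, GW_nil, g_zero, g_one]
  have h0 : GW w 0 = GW w (((0:Fin 3):ℕ) / 3) := by norm_num
  norm_num

end Bas

namespace Bas

/-- distance to the set of fixed points -/
def dd (x : ℝ) : ℝ := min (min x |x - 1 / 2|) (1 - x)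

lemma dd_nonneg {x : ℝ} (hx : x ∈ Ioo (0:ℝ) 1) : 0 ≤ dd x := by
  unfold dd
  exact le_min (le_min hx.1.le (abs_nonneg _)) (by linarith [hx.2])

lemma dd_le_quarter (x : ℝ) : dd x ≤ 1 / 4 := by
  by_contra h
  push Not at h
  unfold dd at h
  rw [lt_min_iff, lt_min_iff] at h
  obtain ⟨⟨h1, h2⟩, h3⟩ := h
  rcases le_total (x - 1/2) 0 with h | h
  · rw [abs_of_nonpos h] at h2; linarith
  · rw [abs_of_nonneg h] at h2; linarith

lemma dd_le (j : Fin 3) (x : ℝ) : dd x ≤ sc j * |nc j x| := by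
  have hs := sc_pos j
  have : sc j * |nc j x| = |x - theFixedPts j| := by
    unfold nc
    rw [abs_div, abs_of_pos hs]; field_simp
  rw [this]
  unfold dd
  fin_cases j
  · simp [theFixedPts, le_abs_self]
  · simp [theFixedPts]
  · refine (min_le_right _ _).trans ?_
    simp only [theFixedPts]
    change 1 - x ≤ |x - 1|
    rw [abs_sub_comm]; exact le_abs_self _

/-- near the fixed point -/
lemma dd_ge (j : Fin 3) {x : ℝ} (hx : x ∈ Icc (0:ℝ) 1) (h : |nc j x| ≤ 1 / 3) :
    min (sc j * |nc j x|) (1 / 6) ≤ dd x := by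
  have hs := sc_pos j
  have h0 : sc j * |nc j x| = |x - theFixedPts j| := by
    unfold nc
    rw [abs_div, abs_of_pos hs]; field_simp
  rw [h0]
  obtain ⟨hx0, hx1⟩ := hx
  rw [abs_le] at h
  obtain ⟨h1, h2⟩ := h
  unfold dd
  fin_cases j
  · norm_num [nc, sc, theFixedPts] at *
    rw [abs_of_nonneg hx0]
    refine ⟨⟨by simp, ?_⟩, ?_⟩
    · right; rw [abs_of_nonpos (by linarith)]; linarith
    · right; linarith
  · norm_num [nc, sc, theFixedPts] at *
    refine ⟨by right; linarith, by right; linarith⟩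
  · norm_num [nc, sc, theFixedPts] at *
    rw [abs_of_nonpos (by linarith)]
    refine ⟨⟨?_, ?_⟩, ?_⟩
    · right; linarith
    · right; rw [abs_of_nonneg (by linarith)]; linarith
    · left; linarith

/-- Control of the nonlinearity. -/
def Dst (E : ℝ → ℝ) : Prop :=
  ∃ L : ℝ → ℝ, (∀ x ∈ Ioo (0:ℝ) 1, HasDerivAt E (Real.exp (L x)) x) ∧
    ∀ x ∈ Ioo (0:ℝ) 1, x ≠ 1 / 2 → ∃ n, HasDerivAt L n x ∧ |n| * dd x ≤ 3

lemma nc_hasDerivAt (j : Fin 3) (x : ℝ) : HasDerivAt (nc j) (1 / sc j) x := by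
  unfold nc
  exact ((hasDerivAt_id x).sub_const _).div_const _

lemma g_hasDerivAt (j : Fin 3) (x : ℝ) :
    HasDerivAt (g j) (1 / (1 + 54 * q (nc j x) ^ 2)) x := by
  have h1 := (((q_hasDerivAt (nc j x)).comp x (nc_hasDerivAt j x)).const_mul (sc j)).const_add
    (theFixedPts j)
  have hs := (sc_pos j).ne'
  refine h1.congr_deriv ?_
  field_simp

lemma key_ineq {n t s dx dy : ℝ} (hs : 0 < s) (hn : n * dy ≤ 3) (hn0 : 0 ≤ n) (ht : 0 ≤ t)
    (hdx : dx ≤ s * (t * (1 + 18 * t ^ 2))) (hdx4 : dx ≤ 1 / 4) (hdx0 : 0 ≤ dx)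
    (hdy : min (s * t) (1 / 6) ≤ dy) (hs1 : s * t ≤ 1 / 6 ∨ s = 1) :
    (n * (1 / (1 + 54 * t ^ 2)) + 108 * t / s / (1 + 54 * t ^ 2) ^ 2) * dx ≤ 3 := by
  have hT : 0 < 1 + 54 * t ^ 2 := by positivity
  rcases le_total (s * t) (1 / 6) with h | h
  · rw [min_eq_left h] at hdy
    have h1 : n * (s * t) ≤ 3 := (mul_le_mul_of_nonneg_left hdy hn0).trans hn
    have h2 : (n * (1 / (1 + 54 * t ^ 2)) + 108 * t / s / (1 + 54 * t ^ 2) ^ 2) * dx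
        ≤ (n * (1 / (1 + 54 * t ^ 2)) + 108 * t / s / (1 + 54 * t ^ 2) ^ 2) *
          (s * (t * (1 + 18 * t ^ 2))) := by
      apply mul_le_mul_of_nonneg_left hdx; positivity
    refine h2.trans ?_
    have h3 : (n * (1 / (1 + 54 * t ^ 2)) + 108 * t / s / (1 + 54 * t ^ 2) ^ 2) *
          (s * (t * (1 + 18 * t ^ 2))) =
        ((n * (s * t)) * (1 + 54 * t ^ 2) + 108 * t ^ 2) * (1 + 18 * t ^ 2) /
          (1 + 54 * t ^ 2) ^ 2 := by
      field_simp
    rw [h3, div_le_iff₀ (by positivity)]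
    have h4 : 0 ≤ t ^ 2 := sq_nonneg t
    have h5 : ((n * (s * t)) * (1 + 54 * t ^ 2) + 108 * t ^ 2) * (1 + 18 * t ^ 2)
        ≤ (3 * (1 + 54 * t ^ 2) + 108 * t ^ 2) * (1 + 18 * t ^ 2) := by gcongr
    refine h5.trans ?_
    nlinarith [mul_nonneg h4 h4]
  · have hsone : s = 1 ∨ s * t = 1 / 6 := by
      rcases hs1 with h1 | h1
      · right; linarith
      · left; exact h1
    rw [min_eq_right h] at hdy
    have h1 : n ≤ 18 := by nlinarith
    rcases hsone with h6 | h6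
    · subst h6
      have ht6 : 1 / 6 ≤ t := by linarith
      have h2 : (n * (1 / (1 + 54 * t ^ 2)) + 108 * t / 1 / (1 + 54 * t ^ 2) ^ 2) * dx
        ≤ (18 * (1 / (1 + 54 * t ^ 2)) + 108 * t / 1 / (1 + 54 * t ^ 2) ^ 2) * (1 / 4) := by
        gcongr
      refine h2.trans ?_
      have h3 : (18 * (1 / (1 + 54 * t ^ 2)) + 108 * t / 1 / (1 + 54 * t ^ 2) ^ 2) * (1 / 4)
        = (18 * (1 + 54 * t ^ 2) + 108 * t) * (1 / 4) / (1 + 54 * t ^ 2) ^ 2 := by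
        field_simp
      rw [h3, div_le_iff₀ (by positivity)]
      have h4 : 5 / 2 ≤ 1 + 54 * t ^ 2 := by nlinarith
      nlinarith [mul_nonneg (sub_nonneg.2 h4) (sub_nonneg.2 h4)]
    · have h1 : n * (s * t) ≤ 3 := by rw [h6]; linarith
      have h2 : (n * (1 / (1 + 54 * t ^ 2)) + 108 * t / s / (1 + 54 * t ^ 2) ^ 2) * dx
          ≤ (n * (1 / (1 + 54 * t ^ 2)) + 108 * t / s / (1 + 54 * t ^ 2) ^ 2) *
            (s * (t * (1 + 18 * t ^ 2))) := by
        apply mul_le_mul_of_nonneg_left hdx; positivity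
      refine h2.trans ?_
      have h3 : (n * (1 / (1 + 54 * t ^ 2)) + 108 * t / s / (1 + 54 * t ^ 2) ^ 2) *
            (s * (t * (1 + 18 * t ^ 2))) =
          ((n * (s * t)) * (1 + 54 * t ^ 2) + 108 * t ^ 2) * (1 + 18 * t ^ 2) /
            (1 + 54 * t ^ 2) ^ 2 := by
        field_simp
      rw [h3, div_le_iff₀ (by positivity)]
      have h4 : 0 ≤ t ^ 2 := sq_nonneg t
      have h5 : ((n * (s * t)) * (1 + 54 * t ^ 2) + 108 * t ^ 2) * (1 + 18 * t ^ 2)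
          ≤ (3 * (1 + 54 * t ^ 2) + 108 * t ^ 2) * (1 + 18 * t ^ 2) := by gcongr
      refine h5.trans ?_
      nlinarith [mul_nonneg h4 h4]

lemma abs_q_le {u : ℝ} (hu : u ^ 2 ≤ 1) : |q u| ≤ 1 / 3 :=
  abs_le_of_sq_le_sq (by linarith [q_sq_le_ninth hu]) (by norm_num)

lemma Dst_comp {E : ℝ → ℝ} (hE : Dst E) (j : Fin 3) : Dst (fun x => E (g j x)) := by
  obtain ⟨L, hL1, hL2⟩ := hE
  refine ⟨fun x => L (g j x) - Real.log (1 + 54 * q (nc j x) ^ 2), ?_, ?_⟩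
  · intro x hx
    have h1 := (hL1 _ (g_mem' j hx)).comp x (g_hasDerivAt j x)
    refine h1.congr_deriv ?_
    rw [Real.exp_sub, Real.exp_log (by positivity)]; ring
  · intro x hx hx2
    have hxI : x ∈ Icc (0:ℝ) 1 := ⟨hx.1.le, hx.2.le⟩
    have hs := sc_pos j
    have hg2 : g j x ≠ 1 / 2 := by
      have h := g_mem_I' j hx
      fin_cases j
      · norm_num at h; simp only [Fin.zero_eta] at *; intro h2; rw [h2] at h; linarith [h.2]
      · intro h2
        apply hx2
        have h3 : g 1 (1 / 2) = 1 / 2 := by norm_num [g, nc, theFixedPts, sc, q_zero]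
        exact (g_strictMono 1).injective (h2.trans h3.symm)
      · norm_num at h; intro h2; simp only [Fin.reduceFinMk] at *; rw [h2] at h; linarith [h.1]
    obtain ⟨n, hn, hnd⟩ := hL2 _ (g_mem' j hx) hg2
    set t := q (nc j x) with ht
    have hT : 0 < 1 + 54 * t ^ 2 := by positivity
    have hq := (q_hasDerivAt (nc j x)).comp x (nc_hasDerivAt j x)
    have h1 : HasDerivAt (fun x => 1 + 54 * q (nc j x) ^ 2)
        (54 * (2 * t * (1 / (1 + 54 * t ^ 2) * (1 / sc j)))) x := by
      refine (((hq.pow 2).const_mul 54).const_add 1).congr_deriv ?_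
      simp [← ht]
    have h2 := (hn.comp x (g_hasDerivAt j x)).sub (h1.log hT.ne')
    refine ⟨_, h2, ?_⟩
    rw [← ht]
    have ht3 : |t| ≤ 1 / 3 := abs_q_le (nc_sq j hxI)
    have key := key_ineq (n := |n|) (t := |t|) (s := sc j) (dx := dd x) (dy := dd (g j x)) hs hnd
      (abs_nonneg _) (abs_nonneg _) ?_ (dd_le_quarter _) (dd_nonneg hx) ?_ ?_
    · refine le_trans ?_ key
      apply mul_le_mul_of_nonneg_right _ (dd_nonneg hx)
      refine (abs_sub _ _).trans ?_
      rw [abs_mul, sq_abs, abs_of_pos (by positivity : 0 < 1 / (1 + 54 * t ^ 2))]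
      apply le_of_eq
      congr 1
      rw [abs_div, abs_mul, abs_mul, abs_mul, abs_of_pos hT,
        abs_of_pos (by positivity : 0 < 1 / (1 + 54 * t ^ 2) * (1 / sc j))]
      norm_num
      field_simp
      ring
    · refine (dd_le j x).trans (le_of_eq ?_)
      congr 1
      conv_lhs => rw [← q_eq (nc j x)]
      rw [abs_mul, ← ht, sq_abs, abs_of_pos (by positivity : 0 < 1 + 18 * t ^ 2)]
    · rw [ht, ← nc_g]
      apply dd_ge j (g_mem j hxI)
      rw [nc_g]; exact ht3
    · fin_cases j
      · right; norm_num [sc]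
      · left; norm_num [sc]; linarith
      · right; norm_num [sc]

lemma Dst_GW (v : List (Fin 3)) : Dst (GW v) := by
  induction v using List.reverseRecOn with
  | nil =>
    refine ⟨fun _ => 0, fun x _ => ?_, fun x _ _ => ⟨0, hasDerivAt_const _ _, by norm_num⟩⟩
    rw [Real.exp_zero]; exact hasDerivAt_id x
  | append_singleton v j ih =>
    have := Dst_comp ih j
    have h : GW (v ++ [j]) = fun x => GW v (g j x) := by
      funext x; rw [GW_append]; rfl
    rw [h]; exact this

/-- Bounded distortion on the unit interval. -/
def BD (D : ℝ) (E : ℝ → ℝ) : Prop :=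
  ∃ e : ℝ, 0 < e ∧ ∀ x y, x ∈ Icc (0:ℝ) 1 → y ∈ Icc (0:ℝ) 1 → x ≤ y →
    e * (y - x) ≤ E y - E x ∧ E y - E x ≤ D * e * (y - x)

lemma far_img (j b : Fin 3) (hjb : j ≠ b) {x : ℝ}
    (hx : x ∈ Icc (((b : ℕ) : ℝ) / 3) (((b : ℕ) + 1) / 3)) : 1 / 6 ≤ |q (nc j x)| := by
  rcases nc_far j b hjb with hf | hf
  · exact (q_third.trans (q_strictMono.monotone (hf x hx))).trans (le_abs_self _)
  · have h := q_strictMono.monotone (hf x hx)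
    rw [q_neg] at h
    have := neg_abs_le (q (nc j x))
    linarith [q_third]

def DC : ℝ := 49 * Real.exp 72

lemma one_le_DC : 1 ≤ DC := by
  unfold DC
  have : 1 ≤ Real.exp 72 := Real.one_le_exp (by norm_num)
  linarith

lemma BD_word (v : List (Fin 3)) (j b : Fin 3) (hjb : j ≠ b) : BD DC (GW (v ++ [j, b])) := by
  obtain ⟨L, hL1, hL2⟩ := Dst_GW v
  set lo := g j (((b : ℕ) : ℝ) / 3) with hlo
  set hi := g j (((b : ℕ) + 1 : ℝ) / 3) with hhi
  have hbI : ∀ x ∈ Icc (((b : ℕ) : ℝ) / 3) (((b : ℕ) + 1) / 3), x ∈ Icc (0:ℝ) 1 := by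
    intro x hx
    have hj : ((b : ℕ) : ℝ) ≤ 2 := by exact_mod_cast Nat.lt_succ_iff.mp b.2
    exact ⟨le_trans (by positivity) hx.1, hx.2.trans (by linarith)⟩
  -- points of `[lo,hi]`
  have hQ : ∀ z ∈ Icc lo hi, z ∈ Ioo (0:ℝ) 1 ∧ z ≠ 1 / 2 ∧ 1 / 12 ≤ dd z := by
    intro z hz
    obtain ⟨x, hx, rfl⟩ := intermediate_value_Icc (f := g j)
      (by linarith : ((b : ℕ) : ℝ) / 3 ≤ ((b : ℕ) + 1) / 3) (g_continuous j).continuousOn hz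
    have h6 := far_img j b hjb hx
    have h3 := abs_q_le (nc_sq j (hbI x hx))
    have hge := dd_ge j (g_mem j (hbI x hx)) (by rw [nc_g]; exact h3)
    have hsc : 1 / 2 ≤ sc j := by fin_cases j <;> norm_num [sc]
    have hd : 1 / 12 ≤ dd (g j x) := by
      refine le_trans ?_ hge
      rw [nc_g]
      apply le_min _ (by norm_num)
      nlinarith
    have hd' := hd
    unfold dd at hd'
    rw [le_min_iff, le_min_iff] at hd'
    obtain ⟨⟨h7, h8⟩, h9⟩ := hd'
    refine ⟨⟨by linarith, by linarith⟩, ?_, hd⟩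
    intro h
    rw [h] at h8; norm_num at h8
  have hlohi : lo ≤ hi := (g_strictMono j).monotone (by linarith)
  have hlen : hi - lo ≤ 1 := by
    have h1 := (hQ lo ⟨le_rfl, hlohi⟩).1
    have h2 := (hQ hi ⟨hlohi, le_rfl⟩).1
    linarith [h1.1, h2.2]
  have hLip : ∀ z ∈ Icc lo hi, |L z - L lo| ≤ 36 := by
    intro z hz
    have hd : ∀ w ∈ Icc lo hi, ∃ n, HasDerivAt L n w ∧ |n| ≤ 36 := by
      intro w hw
      obtain ⟨h1, h2, h3⟩ := hQ w hw
      obtain ⟨n, hn, hnd⟩ := hL2 w h1 h2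
      refine ⟨n, hn, ?_⟩
      nlinarith [abs_nonneg n]
    choose! n hn hn2 using hd
    have := (convex_Icc lo hi).norm_image_sub_le_of_norm_hasDerivWithin_le (f := L) (f' := n)
      (C := 36) (fun w hw => (hn w hw).hasDerivWithinAt) (fun w hw => hn2 w hw)
      (left_mem_Icc.2 hlohi) hz
    rw [Real.norm_eq_abs, Real.norm_eq_abs, abs_of_nonneg (by linarith [hz.1] : 0 ≤ z - lo)] at this
    linarith [hz.2]
  have hmv : ∀ z w, z ∈ Icc lo hi → w ∈ Icc lo hi → z ≤ w →
      Real.exp (L lo - 36) * (w - z) ≤ GW v w - GW v z ∧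
      GW v w - GW v z ≤ Real.exp (L lo + 36) * (w - z) := by
    intro z w hz hw hzw
    rcases hzw.eq_or_lt with h | h
    · subst h; simp
    have hsub : ∀ y ∈ Ioo z w, y ∈ Icc lo hi := fun y hy => ⟨hz.1.trans hy.1.le, hy.2.le.trans hw.2⟩
    obtain ⟨c, hc, hce⟩ := exists_hasDerivAt_eq_slope (GW v) (fun x => Real.exp (L x)) h
      (GW_continuous v).continuousOn (fun y hy => hL1 y (hQ y (hsub y hy)).1)
    rw [eq_div_iff (by linarith)] at hce
    rw [← hce]
    have h1 := abs_le.1 (hLip c (hsub c hc))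
    constructor
    · apply mul_le_mul_of_nonneg_right _ (by linarith)
      apply Real.exp_le_exp.2; linarith
    · apply mul_le_mul_of_nonneg_right _ (by linarith)
      apply Real.exp_le_exp.2; linarith
  refine ⟨Real.exp (L lo - 36) / 49, by positivity, ?_⟩
  intro x y hx hy hxy
  rw [GW_append, GW_append]
  have hxb := g_mem_I b hx
  have hyb := g_mem_I b hy
  have hm1 : g b x ≤ g b y := (g_strictMono b).monotone hxy
  have hm2 : g j (g b x) ≤ g j (g b y) := (g_strictMono j).monotone hm1
  have hin : ∀ z ∈ Icc (((b : ℕ) : ℝ) / 3) (((b : ℕ) + 1) / 3), g j z ∈ Icc lo hi :=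
    fun z hz => ⟨(g_strictMono j).monotone hz.1, (g_strictMono j).monotone hz.2⟩
  obtain ⟨h1, h2⟩ := hmv _ _ (hin _ hxb) (hin _ hyb) hm2
  have h3 := g_sub_ge b hx hy hxy
  have h4 := g_sub_ge j (g_mem b hx) (g_mem b hy) hm1
  have h5 := g_sub_le b hxy
  have h6 := g_sub_le j hm1
  have he : 0 < Real.exp (L lo - 36) := Real.exp_pos _
  change _ ≤ GW v (g j (g b y)) - GW v (g j (g b x)) ∧
    GW v (g j (g b y)) - GW v (g j (g b x)) ≤ _
  constructor
  · refine le_trans ?_ h1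
    rw [div_mul_eq_mul_div, mul_div_assoc]
    apply mul_le_mul_of_nonneg_left _ he.le
    linarith
  · refine h2.trans ?_
    have h7 : DC * (Real.exp (L lo - 36) / 49) = Real.exp (L lo + 36) := by
      unfold DC
      have : L lo + 36 = 72 + (L lo - 36) := by ring
      rw [this, Real.exp_add]; ring
    rw [h7]
    apply mul_le_mul_of_nonneg_left _ (Real.exp_pos _).le
    linarith

lemma BD_nil : BD DC (GW []) := by
  refine ⟨1, one_pos, fun x y _ _ h => ?_⟩
  have := one_le_DC
  simp only [GW_nil]
  constructor
  · linarith
  · nlinarith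

end Bas

namespace Bas

/-- Two words that differ at some common position. -/
def Sep (w w' : List (Fin 3)) : Prop :=
  ∃ c j r j' r', w = c ++ j :: r ∧ w' = c ++ j' :: r' ∧ j ≠ j'

lemma Sep.symm {w w' : List (Fin 3)} (h : Sep w w') : Sep w' w := by
  obtain ⟨c, j, r, j', r', h1, h2, h3⟩ := h
  exact ⟨c, j', r', j, r, h2, h1, h3.symm⟩

lemma Sep.append {w w' : List (Fin 3)} (h : Sep w w') (z z' : List (Fin 3)) :
    Sep (w ++ z) (w' ++ z') := by
  obtain ⟨c, j, r, j', r', rfl, rfl, h3⟩ := h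
  exact ⟨c, j, r ++ z, j', r' ++ z', by simp, by simp, h3⟩

lemma Sep.prepend {w w' : List (Fin 3)} (h : Sep w w') (u : List (Fin 3)) :
    Sep (u ++ w) (u ++ w') := by
  obtain ⟨c, j, r, j', r', rfl, rfl, h3⟩ := h
  exact ⟨u ++ c, j, r, j', r', by simp, by simp, h3⟩

lemma Sep.ne {w w' : List (Fin 3)} (h : Sep w w') : w ≠ w' := by
  obtain ⟨c, j, r, j', r', rfl, rfl, h3⟩ := h
  intro h
  simp at h
  exact h3 h.1

lemma sep_aux {c : List (Fin 3)} {j j' : Fin 3} {r r' : List (Fin 3)} (h : j < j') {x y : ℝ}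
    (hx : x ∈ Icc (0:ℝ) 1) (hy : y ∈ Icc (0:ℝ) 1) :
    GW (c ++ j :: r) x ≤ GW (c ++ j' :: r') y := by
  rw [GW_append, GW_append]
  apply (GW_strictMono c).monotone
  refine (g_mem_I j (GW_mem r hx)).2.trans (le_trans ?_ (g_mem_I j' (GW_mem r' hy)).1)
  have : ((j : ℕ) : ℝ) + 1 ≤ (j' : ℕ) := by exact_mod_cast h
  gcongr

lemma Sep.GW {w w' : List (Fin 3)} (h : Sep w w') :
    (∀ x ∈ Icc (0:ℝ) 1, ∀ y ∈ Icc (0:ℝ) 1, GW w x ≤ GW w' y) ∨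
    (∀ x ∈ Icc (0:ℝ) 1, ∀ y ∈ Icc (0:ℝ) 1, Bas.GW w' y ≤ Bas.GW w x) := by
  obtain ⟨c, j, r, j', r', rfl, rfl, h3⟩ := h
  rcases lt_or_gt_of_ne h3 with h | h
  · left; intro x hx y hy; exact sep_aux h hx hy
  · right; intro x hx y hy; exact sep_aux h hy hx

/-- code words -/
def cw (t : Fin 3 × ℕ × Fin 3) : List (Fin 3) := List.replicate t.2.1 t.1 ++ [t.1, t.2.2]

lemma cw_eq (j b : Fin 3) (a : ℕ) : cw (j, a, b) = List.replicate (a + 1) j ++ [b] := by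
  simp [cw, List.replicate_succ']

lemma cw_sep_lt (j b b' : Fin 3) (a a' : ℕ) (h : a < a') (hb : b ≠ j) :
    Sep (cw (j, a, b)) (cw (j, a', b')) := by
  obtain ⟨k, rfl⟩ := Nat.exists_eq_add_of_lt h
  refine ⟨List.replicate (a + 1) j, b, [], j, List.replicate k j ++ [b'], ?_, ?_, hb⟩
  · rw [cw_eq]
  · rw [cw_eq, show a + k + 1 + 1 = (a + 1) + (k + 1) by ring, List.replicate_add,
      List.replicate_succ (n := k)]
    simp

lemma cw_sep (t t' : Fin 3 × ℕ × Fin 3) (h : t.2.2 ≠ t.1) (h' : t'.2.2 ≠ t'.1) (hne : t ≠ t') :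
    Sep (cw t) (cw t') := by
  obtain ⟨j, a, b⟩ := t
  obtain ⟨j', a', b'⟩ := t'
  simp only at h h'
  by_cases hj : j = j'
  · subst hj
    rcases lt_trichotomy a a' with ha | ha | ha
    · exact cw_sep_lt _ _ _ _ _ ha h
    · subst ha
      have hb : b ≠ b' := by rintro rfl; exact hne rfl
      exact ⟨List.replicate (a + 1) j, b, [], b', [], by rw [cw_eq], by rw [cw_eq], hb⟩
    · exact (cw_sep_lt _ _ _ _ _ ha h').symm
  · refine ⟨[], j, List.replicate a j ++ [b], j', List.replicate a' j' ++ [b'], ?_, ?_, hj⟩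
    · rw [cw_eq, List.replicate_succ]; rfl
    · rw [cw_eq, List.replicate_succ]; rfl

/-- Upper Lipschitz bound -/
def UL (c : ℝ) (E : ℝ → ℝ) : Prop :=
  ∀ x y, x ∈ Icc (0:ℝ) 1 → y ∈ Icc (0:ℝ) 1 → x ≤ y → E y - E x ≤ c * (y - x)

lemma UL_append {c d : ℝ} {u w : List (Fin 3)} (hc : 0 ≤ c) (hu : UL c (GW u)) (hw : UL d (GW w)) :
    UL (c * d) (GW (u ++ w)) := by
  intro x y hx hy h
  rw [GW_append, GW_append]
  have h1 := hu _ _ (GW_mem w hx) (GW_mem w hy) ((GW_strictMono w).monotone h)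
  have h2 := hw _ _ hx hy h
  calc _ ≤ _ := h1
    _ ≤ c * (d * (y - x)) := by gcongr
    _ = _ := by ring

lemma UL_one (w : List (Fin 3)) : UL 1 (GW w) := by
  induction w with
  | nil => intro x y _ _ _; simp
  | cons j w ih =>
    intro x y hx hy h
    exact (g_sub_le j ((GW_strictMono w).monotone h)).trans (ih x y hx hy h)

lemma UL_cw (t : Fin 3 × ℕ × Fin 3) (h : t.2.2 ≠ t.1) : UL (2 / 5) (GW (cw t)) := by
  obtain ⟨j, a, b⟩ := t
  have h1 : UL (2 / 5) (GW [j, b]) := by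
    intro x y hx hy hxy
    have h2 := g_sub_le' j b h.symm ((g_strictMono b).monotone hxy) (g_mem_I b hx) (g_mem_I b hy)
    have h3 := g_sub_le b hxy
    change g j (g b y) - g j (g b x) ≤ _
    linarith
  have := UL_append zero_le_one (UL_one (List.replicate a j)) h1
  rwa [one_mul] at this

def codeA (M : ℕ) : Finset (Fin 3 × ℕ × Fin 3) :=
  (Finset.univ ×ˢ (Finset.range M ×ˢ Finset.univ)).filter (fun t => t.2.2 ≠ t.1)

lemma sum_codeA (M : ℕ) (w : List (Fin 3)) :
    ∑ t ∈ codeA M, ell (w ++ cw t) = ell w - ∑ j, ell (w ++ List.replicate (M + 1) j) := by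
  unfold codeA
  rw [Finset.sum_filter, Finset.sum_product]
  simp_rw [Finset.sum_product]
  have key : ∀ j : Fin 3, ∀ a : ℕ, (∑ b : Fin 3, if b ≠ j then ell (w ++ cw (j, a, b)) else 0) =
      ell (w ++ List.replicate (a + 1) j) - ell (w ++ List.replicate (a + 1 + 1) j) := by
    intro j a
    rw [ell_split (w ++ List.replicate (a + 1) j)]
    simp_rw [cw_eq, ← List.append_assoc]
    rw [← Finset.sum_filter, List.replicate_succ' (n := a + 1), ← List.append_assoc, eq_sub_iff_add_eq,
      ← Finset.sum_filter_add_sum_filter_not Finset.univ (fun b => b ≠ j)]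
    congr 1
    have : Finset.univ.filter (fun b => ¬ b ≠ j) = {j} := by ext b; simp
    rw [this, Finset.sum_singleton]
  have key2 : ∀ j : Fin 3, ∑ a ∈ Finset.range M,
      (∑ b : Fin 3, if b ≠ j then ell (w ++ cw (j, a, b)) else 0) =
      ell (w ++ [j]) - ell (w ++ List.replicate (M + 1) j) := by
    intro j
    rw [Finset.sum_congr rfl (fun a _ => key j a)]
    rw [Finset.sum_range_sub' (fun a => ell (w ++ List.replicate (a + 1) j))]
    rfl
  rw [Finset.sum_congr rfl (fun j _ => key2 j), Finset.sum_sub_distrib, ← ell_split]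

lemma family (ε : ℝ) (hε : ε ≤ 1) (M : ℕ)
    (hM : ∑ j, DC * ell (List.replicate (M + 1) j) ≤ ε) (N : ℕ) :
    ∃ W : Finset (List (Fin 3)), (∀ w ∈ W, ∀ w' ∈ W, w ≠ w' → Sep w w') ∧
      (∀ w ∈ W, BD DC (GW w) ∧ UL ((2 / 5) ^ N) (GW w)) ∧ (1 - ε) ^ N ≤ ∑ w ∈ W, ell w := by
  induction N with
  | zero =>
    refine ⟨{[]}, by simp, ?_, ?_⟩
    · intro w hw
      rw [Finset.mem_singleton] at hw; subst hw
      exact ⟨BD_nil, by simpa using UL_one []⟩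
    · simp [ell]
  | succ N ih =>
    obtain ⟨W, hS, hP, hsum⟩ := ih
    have hsep : ∀ t ∈ W ×ˢ codeA M, ∀ t' ∈ W ×ˢ codeA M, t ≠ t' →
        Sep (t.1 ++ cw t.2) (t'.1 ++ cw t'.2) := by
      rintro ⟨w, t⟩ h ⟨w', t'⟩ h' hne
      simp only [Finset.mem_product, codeA, Finset.mem_filter] at h h'
      by_cases hw : w = w'
      · subst hw
        apply Sep.prepend
        apply cw_sep _ _ h.2.2 h'.2.2
        rintro rfl; exact hne rfl
      · exact (hS w h.1 w' h'.1 hw).append _ _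
    refine ⟨(W ×ˢ codeA M).image (fun t => t.1 ++ cw t.2), ?_, ?_, ?_⟩
    · intro w hw w' hw' hne
      rw [Finset.mem_image] at hw hw'
      obtain ⟨t, ht, rfl⟩ := hw
      obtain ⟨t', ht', rfl⟩ := hw'
      exact hsep t ht t' ht' (by rintro rfl; exact hne rfl)
    · intro w hw
      rw [Finset.mem_image] at hw
      obtain ⟨⟨w, ⟨j, a, b⟩⟩, ht, rfl⟩ := hw
      simp only [Finset.mem_product, codeA, Finset.mem_filter] at ht
      constructor
      · have := BD_word (w ++ List.replicate a j) j b (Ne.symm ht.2.2)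
        rwa [List.append_assoc] at this
      · rw [pow_succ]
        exact UL_append (by positivity) (hP w ht.1).2 (UL_cw _ ht.2.2)
    · rw [Finset.sum_image, Finset.sum_product]
      · simp_rw [sum_codeA]
        rw [pow_succ, mul_comm]
        calc (1 - ε) * (1 - ε) ^ N ≤ (1 - ε) * ∑ w ∈ W, ell w := by
              apply mul_le_mul_of_nonneg_left hsum; linarith
          _ ≤ _ := by
              rw [Finset.mul_sum]
              apply Finset.sum_le_sum
              intro w hw
              obtain ⟨e, he, hb⟩ := (hP w hw).1
              have h1 : e ≤ ell w := by
                have := (hb 0 1 (by simp) (by simp) zero_le_one).1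
                unfold ell; linarith
              have h2 : ∀ j, ell (w ++ List.replicate (M + 1) j) ≤
                  ell w * (DC * ell (List.replicate (M + 1) j)) := by
                intro j
                have h3 := (hb _ _ (GW_mem (List.replicate (M + 1) j) (x := 0) (by simp))
                  (GW_mem (List.replicate (M + 1) j) (x := 1) (by simp))
                  ((GW_strictMono _).monotone zero_le_one)).2
                have h4 := ell_pos (List.replicate (M + 1) j)
                have h5 := one_le_DC
                calc ell (w ++ List.replicate (M + 1) j) ≤ DC * e * ell (List.replicate (M + 1) j) := by
                      conv_lhs => unfold ell
                      rw [GW_append, GW_append]; exact h3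
                  _ ≤ DC * ell w * ell (List.replicate (M + 1) j) := by gcongr
                  _ = _ := by ring
              have h6 : ∑ j, ell (w ++ List.replicate (M + 1) j) ≤ ell w * ε := by
                calc _ ≤ ∑ j, ell w * (DC * ell (List.replicate (M + 1) j)) :=
                      Finset.sum_le_sum (fun j _ => h2 j)
                  _ = ell w * ∑ j, (DC * ell (List.replicate (M + 1) j)) := by rw [Finset.mul_sum]
                  _ ≤ _ := mul_le_mul_of_nonneg_left hM (ell_pos w).le
              linarith
      · intro t ht t' ht' heq
        by_contra hne
        exact (hsep t ht t' ht' hne).ne heq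

lemma ell_replicate_le (j : Fin 3) (M : ℕ) : ell (List.replicate (M + 1) j) ≤ 2 / (3 * Real.sqrt (M + 1)) := by
  have h : ∀ x ∈ Icc (0:ℝ) 1, |GW (List.replicate (M + 1) j) x - theFixedPts j| ≤
      1 / (3 * Real.sqrt (M + 1)) := by
    intro x hx
    have h1 := replicate_close (M + 1) j hx
    apply abs_le_of_sq_le_sq _ (by positivity)
    rw [div_pow, mul_pow, Real.sq_sqrt (by positivity), le_div_iff₀ (by positivity)]
    push_cast at h1
    nlinarith
  have h0 := abs_le.1 (h 0 (by simp))
  have h1 := abs_le.1 (h 1 (by simp))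
  unfold ell
  have : 2 / (3 * Real.sqrt (M + 1)) = 1 / (3 * Real.sqrt (M + 1)) + 1 / (3 * Real.sqrt (M + 1)) := by ring
  rw [this]; linarith [h0.1, h1.2]

lemma exists_M {ε : ℝ} (hε : 0 < ε) : ∃ M : ℕ, ∑ j : Fin 3, DC * ell (List.replicate (M + 1) j) ≤ ε := by
  have hD : 0 < DC := by linarith [one_le_DC]
  obtain ⟨M, hM⟩ := exists_nat_ge ((2 * DC / ε) ^ 2)
  refine ⟨M, ?_⟩
  have h1 : 2 * DC / ε ≤ Real.sqrt (M + 1) := by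
    apply Real.le_sqrt_of_sq_le; linarith
  have hs : 0 < Real.sqrt ((M:ℝ) + 1) := by positivity
  calc _ ≤ ∑ j : Fin 3, DC * (2 / (3 * Real.sqrt (M + 1))) := by
        apply Finset.sum_le_sum; intro j _
        exact mul_le_mul_of_nonneg_left (ell_replicate_le j M) hD.le
    _ = 2 * DC / Real.sqrt (M + 1) := by simp; field_simp
    _ ≤ ε := by
        rw [div_le_iff₀ hs]; rw [div_le_iff₀ hε] at h1; linarith

lemma pigeon {ι : Type*} {s s' A : ℝ} (hs : 0 < s) (hss : s < s') (hA : 0 < A) :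
    ∃ B : ℝ, ∀ (W : Finset ι) (v : ι → ℝ), (∀ w ∈ W, 0 < v w ∧ v w ≤ 1) →
      B < ∑ w ∈ W, v w ^ s' →
      ∃ m : ℝ, 0 < m ∧ m ≤ 1 ∧ A ≤ (W.filter (fun w => m ≤ v w)).card * m ^ s := by
  set r : ℝ := (1 / 2 : ℝ) ^ (s' - s) with hr
  have hr0 : 0 < r := by positivity
  have hr1 : r < 1 := Real.rpow_lt_one (by norm_num) (by norm_num) (by linarith)
  refine ⟨A * 2 ^ s * (1 - r)⁻¹, fun W v hv hB => ?_⟩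
  by_contra hcon
  push Not at hcon
  apply absurd hB
  push Not
  have hk : ∀ w ∈ W, ∃ n : ℕ, (1 / 2 : ℝ) ^ (n + 1) < v w ∧ v w ≤ (1 / 2 : ℝ) ^ n :=
    fun w hw => exists_nat_pow_near_of_lt_one (hv w hw).1 (hv w hw).2 (by norm_num) (by norm_num)
  choose! k hk1 hk2 using hk
  calc ∑ w ∈ W, v w ^ s' ≤ ∑ w ∈ W, ((1 / 2 : ℝ) ^ k w) ^ s' := by
        apply Finset.sum_le_sum; intro w hw
        exact Real.rpow_le_rpow (hv w hw).1.le (hk2 w hw) (by linarith)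
    _ = ∑ n ∈ W.image k, ∑ w ∈ W.filter (fun w => k w = n), ((1 / 2 : ℝ) ^ k w) ^ s' := by
        rw [Finset.sum_fiberwise_of_maps_to]
        intro w hw; exact Finset.mem_image_of_mem k hw
    _ ≤ ∑ n ∈ W.image k, A * 2 ^ s * r ^ n := by
        apply Finset.sum_le_sum
        intro n _
        have h1 : ∑ w ∈ W.filter (fun w => k w = n), ((1 / 2 : ℝ) ^ k w) ^ s' =
            (W.filter (fun w => k w = n)).card * ((1 / 2 : ℝ) ^ n) ^ s' := by
          rw [Finset.sum_congr rfl (g := fun _ => ((1 / 2 : ℝ) ^ n) ^ s')]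
          · simp
          · intro w hw; rw [(Finset.mem_filter.1 hw).2]
        rw [h1]
        have h2 := (hcon ((1 / 2 : ℝ) ^ (n + 1)) (by positivity)
          (pow_le_one₀ (by norm_num) (by norm_num))).le
        have h3 : ((W.filter (fun w => k w = n)).card : ℝ) ≤
            (W.filter (fun w => (1 / 2 : ℝ) ^ (n + 1) ≤ v w)).card := by
          norm_cast
          apply Finset.card_le_card
          intro w hw
          rw [Finset.mem_filter] at hw ⊢
          refine ⟨hw.1, ?_⟩
          rw [← hw.2]; exact (hk1 w hw.1).le
        have h4 : ((1 / 2 : ℝ) ^ n) ^ s' = ((1 / 2 : ℝ) ^ (n + 1)) ^ s * (2 ^ s * r ^ n) := by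
          rw [hr, ← Real.rpow_natCast, ← Real.rpow_natCast, ← Real.rpow_natCast, ← Real.rpow_mul (by norm_num),
            ← Real.rpow_mul (by norm_num), ← Real.rpow_mul (by norm_num)]
          have : (2:ℝ) ^ s = (1 / 2 : ℝ) ^ (-s) := by
            rw [one_div, Real.inv_rpow (by norm_num), Real.rpow_neg (by norm_num), inv_inv]
          rw [this, ← Real.rpow_add (by norm_num), ← Real.rpow_add (by norm_num)]
          congr 1
          push_cast; ring
        rw [h4]
        calc _ ≤ ((W.filter (fun w => (1 / 2 : ℝ) ^ (n + 1) ≤ v w)).card : ℝ) *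
              (((1 / 2 : ℝ) ^ (n + 1)) ^ s * (2 ^ s * r ^ n)) := by gcongr
          _ = ((W.filter (fun w => (1 / 2 : ℝ) ^ (n + 1) ≤ v w)).card : ℝ) *
              ((1 / 2 : ℝ) ^ (n + 1)) ^ s * (2 ^ s * r ^ n) := by ring
          _ ≤ A * (2 ^ s * r ^ n) := by gcongr
          _ = _ := by ring
    _ = A * 2 ^ s * ∑ n ∈ W.image k, r ^ n := by rw [Finset.mul_sum]
    _ ≤ _ := by
        apply mul_le_mul_of_nonneg_left _ (by positivity)
        rw [← tsum_geometric_of_lt_one hr0.le hr1]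
        exact (summable_geometric_of_lt_one hr0.le hr1).sum_le_tsum _ (fun _ _ => by positivity)

lemma alphabet {s A : ℝ} (hs : 0 < s) (hs1 : s < 1) (hA : 0 < A) :
    ∃ (W : Finset (List (Fin 3))) (m : ℝ), 0 < m ∧ m ≤ 1 ∧
      (∀ w ∈ W, ∀ w' ∈ W, w ≠ w' → Sep w w') ∧ (∀ w ∈ W, LL m (GW w)) ∧ A ≤ W.card * m ^ s := by
  obtain ⟨s', hss, hs'1⟩ := exists_between hs1
  obtain ⟨B, hB⟩ := pigeon (ι := List (Fin 3)) hs hss hA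
  have hD : 0 < DC := by linarith [one_le_DC]
  set θ : ℝ := (2 / 5 : ℝ) ^ (s' - 1) with hθ
  have hθ1 : 1 < θ := Real.one_lt_rpow_of_pos_of_lt_one_of_neg (by norm_num) (by norm_num) (by linarith)
  obtain ⟨ε, hε0, hε1, hρ⟩ : ∃ ε : ℝ, 0 < ε ∧ ε ≤ 1 ∧ 1 < (1 - ε) * θ := by
    refine ⟨(θ - 1) / (2 * θ), by apply div_pos <;> linarith, ?_, ?_⟩
    · rw [div_le_one (by linarith)]; linarith
    · have : (1 - (θ - 1) / (2 * θ)) * θ = (θ + 1) / 2 := by field_simp; ring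
      rw [this]; linarith
  obtain ⟨M, hM⟩ := exists_M hε0
  obtain ⟨N, hN⟩ := pow_unbounded_of_one_lt (B * DC ^ s') hρ
  obtain ⟨W, hS, hP, hsum⟩ := family ε hε1 M hM N
  have hell : ∀ w ∈ W, ell w ≤ (2 / 5) ^ N := by
    intro w hw
    have := (hP w hw).2 0 1 (by simp) (by simp) zero_le_one
    unfold ell; linarith
  have h1 : ((1 - ε) * θ) ^ N ≤ ∑ w ∈ W, ell w ^ s' := by
    calc ((1 - ε) * θ) ^ N = (1 - ε) ^ N * θ ^ N := mul_pow _ _ _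
      _ ≤ (∑ w ∈ W, ell w) * θ ^ N := by gcongr
      _ = ∑ w ∈ W, ell w * θ ^ N := by rw [Finset.sum_mul]
      _ ≤ _ := by
        apply Finset.sum_le_sum; intro w hw
        have h0 := ell_pos w
        have h2 : θ ^ N ≤ ell w ^ (s' - 1) := by
          have : θ ^ N = ((2 / 5 : ℝ) ^ N) ^ (s' - 1) := by
            rw [hθ, ← Real.rpow_natCast, ← Real.rpow_natCast, ← Real.rpow_mul (by norm_num),
              ← Real.rpow_mul (by norm_num), mul_comm]
          rw [this]
          exact Real.rpow_le_rpow_of_nonpos h0 (hell w hw) (by linarith)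
        calc ell w * θ ^ N ≤ ell w * ell w ^ (s' - 1) := by gcongr
          _ = ell w ^ (1 + (s' - 1)) := by rw [Real.rpow_add h0, Real.rpow_one]
          _ = _ := by congr 1; ring
  have h2 : B < ∑ w ∈ W, (ell w / DC) ^ s' := by
    have : ∀ w ∈ W, (ell w / DC) ^ s' = ell w ^ s' / DC ^ s' :=
      fun w _ => Real.div_rpow (ell_pos w).le hD.le _
    rw [Finset.sum_congr rfl this, ← Finset.sum_div, lt_div_iff₀ (by positivity)]
    linarith
  obtain ⟨m, hm0, hm1, hA⟩ := hB W (fun w => ell w / DC) (by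
    intro w hw
    refine ⟨div_pos (ell_pos w) hD, ?_⟩
    rw [div_le_one hD]
    refine (hell w hw).trans (le_trans ?_ one_le_DC)
    exact pow_le_one₀ (by norm_num) (by norm_num)) h2
  refine ⟨W.filter (fun w => m ≤ ell w / DC), m, hm0, hm1, ?_, ?_, hA⟩
  · intro w hw w' hw' hne
    exact hS w (Finset.mem_filter.1 hw).1 w' (Finset.mem_filter.1 hw').1 hne
  · intro w hw x y hx hy hxy
    rw [Finset.mem_filter] at hw
    obtain ⟨e, he, hb⟩ := (hP w hw.1).1
    refine le_trans ?_ (hb x y hx hy hxy).1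
    apply mul_le_mul_of_nonneg_right _ (by linarith)
    have h3 := (hb 0 1 (by simp) (by simp) zero_le_one).2
    refine hw.2.trans ?_
    rw [div_le_iff₀ hD]
    unfold ell; linarith

end Bas

namespace Bas

lemma LL_mono {c d : ℝ} {E : ℝ → ℝ} (h : LL c E) (hd : d ≤ c) : LL d E := by
  intro x y hx hy hxy
  exact le_trans (mul_le_mul_of_nonneg_right hd (by linarith)) (h x y hx hy hxy)

lemma LL_abs {c : ℝ} {E : ℝ → ℝ} (h : LL c E) {x y : ℝ} (hx : x ∈ Icc (0:ℝ) 1)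
    (hy : y ∈ Icc (0:ℝ) 1) : c * |x - y| ≤ |E x - E y| := by
  rcases le_total x y with hxy | hxy
  · rw [abs_sub_comm, abs_sub_comm (E x), abs_of_nonneg (by linarith : 0 ≤ y - x)]
    exact (h x y hx hy hxy).trans (le_abs_self _)
  · rw [abs_of_nonneg (by linarith : 0 ≤ x - y)]
    exact (h y x hy hx hxy).trans (le_abs_self _)

/-- finite approximations of the coded orbit -/
def approxPt (ψ : ℕ → List (Fin 3)) : ℕ → ℕ → ℝ
  | 0, _ => 0
  | n+1, i => GW (ψ i) (approxPt ψ n (i+1))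

lemma approxPt_mem (ψ : ℕ → List (Fin 3)) (n i : ℕ) : approxPt ψ n i ∈ Icc (0:ℝ) 1 := by
  induction n generalizing i with
  | zero => simp [approxPt]
  | succ n ih => exact GW_mem _ (ih _)

lemma approxPt_mono (ψ : ℕ → List (Fin 3)) (i : ℕ) : Monotone (fun n => approxPt ψ n i) := by
  apply monotone_nat_of_le_succ
  intro n
  induction n generalizing i with
  | zero => exact (approxPt_mem ψ 1 i).1
  | succ n ih => exact (GW_strictMono _).monotone (ih _)

lemma exists_orbit (ψ : ℕ → List (Fin 3)) : ∃ x : ℕ → ℝ, (∀ i, x i ∈ Icc (0:ℝ) 1) ∧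
    ∀ i, x i = GW (ψ i) (x (i+1)) := by
  have hT : ∀ i, Tendsto (fun n => approxPt ψ n i) atTop (𝓝 (⨆ n, approxPt ψ n i)) := fun i =>
    tendsto_atTop_ciSup (approxPt_mono ψ i) ⟨1, by rintro _ ⟨n, rfl⟩; exact (approxPt_mem ψ n i).2⟩
  refine ⟨fun i => ⨆ n, approxPt ψ n i, ?_, ?_⟩
  · intro i
    exact isClosed_Icc.mem_of_tendsto (hT i) (Eventually.of_forall fun n => approxPt_mem ψ n i)
  · intro i
    have h1 := (hT i).comp (tendsto_add_atTop_nat 1)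
    have h2 := ((GW_continuous (ψ i)).tendsto _).comp (hT (i+1))
    exact tendsto_nhds_unique h1 h2

open Classical in
/-- the neutral part of the `i`-th letter -/
def phi (p : Fin 3 → ℝ) (i : ℕ) : List (Fin 3) :=
  if IsSquare i then List.replicate ⌊p 0 * i⌋₊ 0 ++ (List.replicate ⌊p 1 * i⌋₊ 1 ++
    List.replicate ⌊p 2 * i⌋₊ 2) else []

open Classical in
/-- square-root exponents -/
def esq (i : ℕ) : ℕ := if IsSquare i then Nat.sqrt i else 0

lemma esq_sum_aux (n : ℕ) : 2 * ∑ i ∈ Finset.range (n+1), esq i ≤ Nat.sqrt n * (Nat.sqrt n + 1) := by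
  induction n with
  | zero => simp [esq]
  | succ n ih =>
    rw [Finset.sum_range_succ]
    by_cases h : IsSquare (n+1)
    · have h0 := h
      obtain ⟨k, hk⟩ := h
      have e : esq (n+1) = k := by
        rw [esq, if_pos h0, hk, Nat.sqrt_eq]
      have e2 : Nat.sqrt n < k := by rw [Nat.sqrt_lt]; omega
      have e3 : Nat.sqrt (n+1) = k := by rw [hk, Nat.sqrt_eq]
      rw [e, e3]
      nlinarith
    · rw [esq, if_neg h]
      have : Nat.sqrt n ≤ Nat.sqrt (n+1) := Nat.sqrt_le_sqrt (by omega)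
      nlinarith

lemma esq_sum (n : ℕ) : ∑ i ∈ Finset.range n, esq i ≤ n := by
  cases n with
  | zero => simp
  | succ n =>
    have h1 := esq_sum_aux n
    have h2 := Nat.sqrt_le n
    rcases Nat.eq_zero_or_pos (Nat.sqrt n) with h | h
    · rw [h] at h1; omega
    · nlinarith

lemma four_pow (k : ℕ) : k*k + 1 ≤ 4^k := by
  induction k with
  | zero => simp
  | succ k ih => rw [pow_succ]; nlinarith

lemma floor_le_of {p : Fin 3 → ℝ} (hp : p ∈ simplexS) (j : Fin 3) (i : ℕ) :
    ⌊p j * i⌋₊ ≤ i := by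
  have h := hp.1 j
  have : p j * i ≤ i := by
    have : (0:ℝ) ≤ i := by positivity
    nlinarith [h.2]
  exact Nat.floor_le_of_le this

lemma LL_phi {p : Fin 3 → ℝ} (hp : p ∈ simplexS) (i : ℕ) :
    LL (((1/4:ℝ)^18)^(esq i)) (GW (phi p i)) := by
  unfold phi esq
  split_ifs with h
  · obtain ⟨k, rfl⟩ := h
    rw [Nat.sqrt_eq]
    have key : ∀ j : Fin 3, LL (((1/4:ℝ)^6)^k) (GW (List.replicate ⌊p j * (k*k:ℕ)⌋₊ j)) := by
      intro j
      apply LL_mono (LL_replicate _ _)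
      rw [← pow_mul, mul_comm, pow_mul, one_div_pow, one_div_pow]
      apply one_div_le_one_div_of_le (by positivity)
      gcongr
      have h1 := floor_le_of hp j (k*k)
      have h2 := four_pow k
      exact_mod_cast (by omega : ⌊p j * (k*k:ℕ)⌋₊ + 1 ≤ 4^k)
    have := LL_append (by positivity) (key 0) (LL_append (by positivity) (key 1) (key 2))
    convert this using 1
    rw [← mul_pow, ← mul_pow]; congr 1; ring
  · simpa using LL_nil

lemma gap {w w' : List (Fin 3)} {m : ℝ} (hS : Sep w w') (hw : LL m (GW w)) (hw' : LL m (GW w'))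
    (hm : 0 < m) {u u' : ℝ} (hu : u ∈ Icc (1/3:ℝ) (2/3)) (hu' : u' ∈ Icc (1/3:ℝ) (2/3)) :
    m / 3 ≤ |GW w u - GW w' u'| := by
  have z : (0:ℝ) ∈ Icc (0:ℝ) 1 := by simp
  have o : (1:ℝ) ∈ Icc (0:ℝ) 1 := by simp
  have uI : u ∈ Icc (0:ℝ) 1 := ⟨by linarith [hu.1], by linarith [hu.2]⟩
  have uI' : u' ∈ Icc (0:ℝ) 1 := ⟨by linarith [hu'.1], by linarith [hu'.2]⟩
  rcases hS.GW with h | h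
  · have h1 := hw' 0 u' z uI' uI'.1
    have h2 := h u uI 0 z
    rw [abs_sub_comm]
    refine le_trans ?_ (le_abs_self _)
    nlinarith [hu'.1]
  · have h1 := hw 0 u z uI uI.1
    have h2 := h 0 z u' uI'
    refine le_trans ?_ (le_abs_self _)
    nlinarith [hu.1]

lemma GW_one_mem {y : ℝ} (hy : y ∈ Icc (0:ℝ) 1) : GW [1] y ∈ Icc (1/3:ℝ) (2/3) := by
  have := g_mem_I 1 hy
  simp only [GW_cons, GW_nil]
  constructor
  · have := this.1; norm_num at this ⊢; linarith
  · have := this.2; norm_num at this ⊢; linarith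

lemma dim_lower {p : Fin 3 → ℝ} (hp : p ∈ simplexS) {s : ℝ} (hs : 0 < s) (hs1 : s < 1) :
    ∃ (b : ℕ) (w : Fin b → List (Fin 3)) (X : (ℕ → Fin b) → ℕ → ℝ),
      (∀ ω i, X ω i ∈ Icc (0:ℝ) 1) ∧
      (∀ ω i, X ω i = GW (w (ω i) ++ ([1] ++ phi p i)) (X ω (i+1))) ∧
      ENNReal.ofReal s ≤ dimH (range fun ω => X ω 0) := by
  set η : ℝ := (1/4:ℝ)^18 with hη
  have η0 : 0 < η := by positivity
  have η1 : η ≤ 1 := pow_le_one₀ (by norm_num) (by norm_num)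
  obtain ⟨W, m, hm0, hm1, hsep, hLL, hA⟩ := alphabet (A := (7/η)^s + 2) hs hs1 (by positivity)
  set b := W.card with hb
  have hms : m^s ≤ 1 := Real.rpow_le_one hm0.le hm1 hs.le
  have hms0 : 0 < m^s := by positivity
  have hb2 : (2:ℝ) ≤ b := by
    have h1 : (0:ℝ) < (7/η)^s := by positivity
    have : (b:ℝ) * m^s ≤ b := mul_le_of_le_one_right (by positivity) hms
    linarith
  have hb1 : 1 < b := by exact_mod_cast (by linarith : (1:ℝ) < b)
  let w : Fin b → List (Fin 3) := fun d => (W.equivFin.symm d : List (Fin 3))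
  have wmem : ∀ d, w d ∈ W := fun d => (W.equivFin.symm d).2
  have winj : Function.Injective w := fun d d' h => W.equivFin.symm.injective (Subtype.ext h)
  choose X hX hXr using fun ω : ℕ → Fin b =>
    exists_orbit (fun i => w (ω i) ++ ([1] ++ phi p i))
  refine ⟨b, w, X, hX, hXr, ?_⟩
  set ρ : ℝ := m/7*η with hρ
  have ρ0 : 0 < ρ := by positivity
  have hbρ : 1 ≤ b * ρ^s := by
    have e1 : ρ^s = m^s * (η/7)^s := by
      rw [← Real.mul_rpow hm0.le (by positivity)]; congr 1; rw [hρ]; ring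
    have e2 : (7/η)^s * (η/7)^s = 1 := by
      rw [← Real.mul_rpow (by positivity) (by positivity)]
      rw [show 7/η*(η/7) = 1 by field_simp]; simp
    rw [e1, ← mul_assoc, ← e2]
    gcongr
    linarith
  -- letters are uniformly expanding in reverse
  have hpre : ∀ ω ω' : ℕ → Fin b, ∀ n, (∀ i < n, ω i = ω' i) →
      (∏ i ∈ Finset.range n, (m/7 * η^(esq i))) * |X ω n - X ω' n| ≤ |X ω 0 - X ω' 0| := by
    intro ω ω' n
    induction n with
    | zero => intro _; simp
    | succ n ih =>
      intro h
      refine le_trans ?_ (ih fun i hi => h i (by omega))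
      rw [Finset.prod_range_succ, mul_assoc]
      apply mul_le_mul_of_nonneg_left _ (Finset.prod_nonneg fun i _ => by positivity)
      rw [hXr ω n, hXr ω' n, h n (by omega)]
      have L : LL (m * (1/7 * η^(esq n))) (GW (w (ω' n) ++ ([1] ++ phi p n))) :=
        LL_append hm0.le (hLL _ (wmem _)) (LL_append (by norm_num) (LL_single 1) (LL_phi hp n))
      refine le_trans (le_of_eq ?_) (LL_abs L (hX ω (n+1)) (hX ω' (n+1)))
      ring
  have hprod : ∀ n, ρ^n ≤ ∏ i ∈ Finset.range n, (m/7 * η^(esq i)) := by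
    intro n
    rw [Finset.prod_mul_distrib, Finset.prod_const, Finset.card_range, Finset.prod_pow_eq_pow_sum,
      hρ, mul_pow]
    apply mul_le_mul_of_nonneg_left _ (by positivity)
    exact pow_le_pow_of_le_one η0.le η1 (esq_sum n)
  have hdist : ∀ ω ω' : ℕ → Fin b, ∀ n, (∀ i < n, ω i = ω' i) → ω n ≠ ω' n →
      ρ^n * (m/3) ≤ |X ω 0 - X ω' 0| := by
    intro ω ω' n h hne
    refine le_trans ?_ (hpre ω ω' n h)
    apply mul_le_mul (hprod n) _ (by positivity) (Finset.prod_nonneg fun i _ => by positivity)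
    rw [hXr ω n, hXr ω' n, GW_append, GW_append, GW_append, GW_append]
    exact gap (hsep _ (wmem _) _ (wmem _) (fun h => hne (winj h))) (hLL _ (wmem _))
      (hLL _ (wmem _)) hm0 (GW_one_mem (GW_mem _ (hX _ _))) (GW_one_mem (GW_mem _ (hX _ _)))
  have hfirst : ∀ ω ω' : ℕ → Fin b, ω ≠ ω' → ∃ n, (∀ i < n, ω i = ω' i) ∧ ω n ≠ ω' n := by
    intro ω ω' h
    have hex : ∃ n, ω n ≠ ω' n := by
      by_contra hc; push Not at hc; exact h (funext hc)
    classical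
    exact ⟨Nat.find hex, fun i hi => not_not.1 (Nat.find_min hex hi), Nat.find_spec hex⟩
  have hhol : ∀ ω ω' : ℕ → Fin b, |Real.ofDigits ω - Real.ofDigits ω'| ≤
      (3/m)^s * |X ω 0 - X ω' 0|^s := by
    intro ω ω'
    by_cases h : ω = ω'
    · subst h; simp; positivity
    obtain ⟨n, h1, h2⟩ := hfirst ω ω' h
    refine (Real.abs_ofDigits_sub_ofDigits_le h1).trans ?_
    rw [← Real.mul_rpow (by positivity) (abs_nonneg _)]
    have h3 : ρ^n ≤ 3/m * |X ω 0 - X ω' 0| := by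
      have := hdist ω ω' n h1 h2
      rw [div_mul_eq_mul_div, le_div_iff₀ hm0]; linarith
    refine le_trans ?_ (Real.rpow_le_rpow (by positivity) h3 hs.le)
    rw [← Real.rpow_natCast_mul ρ0.le, mul_comm (n:ℝ), Real.rpow_mul_natCast ρ0.le]
    have hbn : (0:ℝ) < (b:ℝ)^n := pow_pos (by linarith) n
    rw [inv_le_iff_one_le_mul₀ hbn, ← mul_pow, mul_comm]
    exact one_le_pow₀ hbρ
  have hinj : ∀ ω ω', X ω 0 = X ω' 0 → ω = ω' := by
    intro ω ω' he
    by_contra h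
    obtain ⟨n, h1, h2⟩ := hfirst ω ω' h
    have := hdist ω ω' n h1 h2
    rw [he, sub_self, abs_zero] at this
    have : 0 < ρ^n * (m/3) := by positivity
    linarith
  classical
  let F : ℝ → ℝ := fun x => if h : ∃ ω, X ω 0 = x then Real.ofDigits h.choose else 0
  have hF : ∀ ω, F (X ω 0) = Real.ofDigits ω := by
    intro ω
    have h : ∃ ω', X ω' 0 = X ω 0 := ⟨ω, rfl⟩
    simp only [F, dif_pos h]
    rw [hinj _ _ h.choose_spec]
  have hHold : HolderOnWith (((3/m)^s).toNNReal) s.toNNReal F (range fun ω => X ω 0) := by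
    rintro _ ⟨ω, rfl⟩ _ ⟨ω', rfl⟩
    simp only [hF]
    rw [edist_dist, edist_dist, Real.dist_eq, Real.dist_eq, Real.coe_toNNReal s hs.le,
      ENNReal.ofReal_rpow_of_nonneg (abs_nonneg _) hs.le]
    change _ ≤ ENNReal.ofReal ((3/m)^s) * _
    rw [← ENNReal.ofReal_mul (by positivity)]
    exact ENNReal.ofReal_le_ofReal (hhol ω ω')
  have h1 := hHold.dimH_image_le (by simpa using hs)
  have h2 : Icc (0:ℝ) 1 ⊆ F '' (range fun ω => X ω 0) := by
    intro y hy
    obtain ⟨ω, -, hω⟩ := Real.ofDigits_SurjOn hb1 hy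
    exact ⟨X ω 0, ⟨ω, rfl⟩, by rw [hF, hω]⟩
  have h3 : (1:ℝ≥0∞) = dimH (Icc (0:ℝ) 1) := by
    rw [Real.dimH_of_nonempty_interior (by rw [interior_Icc]; exact ⟨1/2, by norm_num, by norm_num⟩)]
    simp
  have h4 : 1 ≤ dimH (range fun ω => X ω 0) / (s.toNNReal : ℝ≥0∞) :=
    (h3.le.trans (dimH_mono h2)).trans h1
  rw [ENNReal.le_div_iff_mul_le (Or.inl (by simpa using hs)) (Or.inl (by simp)), one_mul] at h4
  exact h4

end Bas

namespace Bas

/-- start times of the letters -/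
def startT (len : ℕ → ℕ) (i : ℕ) : ℕ := ∑ k ∈ Finset.range i, len k

lemma startT_succ (len : ℕ → ℕ) (i : ℕ) : startT len (i+1) = startT len i + len i :=
  Finset.sum_range_succ _ _

lemma startT_cubic (len : ℕ → ℕ) (hlb : ∀ i, IsSquare i → i ≤ len i + 3) (n : ℕ) :
    Nat.sqrt n ^ 3 ≤ 3 * startT len (n+1) + 9 * (Nat.sqrt n + 1) := by
  induction n with
  | zero => simp
  | succ n ih =>
    rw [startT_succ len (n+1)]
    by_cases h : IsSquare (n+1)
    · have h0 := hlb _ h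
      obtain ⟨k, hk⟩ := h
      have e3 : Nat.sqrt (n+1) = k := by rw [hk, Nat.sqrt_eq]
      have e2 : Nat.sqrt n < k := by rw [Nat.sqrt_lt]; omega
      obtain ⟨r, rfl⟩ : ∃ r, k = r + 1 := ⟨k-1, by omega⟩
      have e4 : r ≤ Nat.sqrt n := by rw [Nat.le_sqrt]; nlinarith
      have e5 : Nat.sqrt n = r := by omega
      rw [e5] at ih
      rw [e3]
      nlinarith
    · have e : Nat.sqrt (n+1) = Nat.sqrt n := by
        have h1 : Nat.sqrt n ≤ Nat.sqrt (n+1) := Nat.sqrt_le_sqrt (by omega)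
        by_contra hne
        have h2 : Nat.sqrt n < Nat.sqrt (n+1) := by omega
        rw [Nat.sqrt_lt] at h2
        have h3 := Nat.sqrt_le (n+1)
        exact h ⟨Nat.sqrt (n+1), by omega⟩
      rw [e]; omega

lemma startT_superlinear (len : ℕ → ℕ) (hlb : ∀ i, IsSquare i → i ≤ len i + 3) (B : ℕ) :
    ∃ I, ∀ i, I ≤ i → B * (i+1) ≤ startT len i := by
  refine ⟨(24*B+18)*(24*B+18)+1, fun i hi => ?_⟩
  obtain ⟨n, rfl⟩ : ∃ n, i = n+1 := ⟨i-1, by omega⟩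
  have h1 := startT_cubic len hlb n
  have h2 : 24*B+18 ≤ Nat.sqrt n := by rw [Nat.le_sqrt]; omega
  have h3 := Nat.sqrt_lt_self (n := n) (by nlinarith)
  have h4 := Nat.lt_succ_sqrt n
  set r := Nat.sqrt n
  have h5 : n + 1 + 1 ≤ 2*((r+1)*(r+1)) := by
    simp only [Nat.succ_eq_add_one] at h4; nlinarith
  have h6 : (24*B+18)*r^2 ≤ r^3 := by
    rw [pow_succ r 2, mul_comm]; gcongr
  have h7 : (r+1)*(r+1) ≤ 4*r^2 := by nlinarith
  have h8 : B*(n+1+1) ≤ B*(8*r^2) := by gcongr; linarith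
  have h9 : 9*(r+1) ≤ 18*r^2 := by nlinarith
  nlinarith

lemma avg_tendsto (h : ℕ → ℝ) (H : ℝ) (hH0 : 0 ≤ H) (hH : ∀ t, |h t| ≤ H) (len : ℕ → ℕ)
    (h1 : ∀ i, 1 ≤ len i) (L : ℕ) (hub : ∀ i, len i ≤ L * (i+1))
    (hlb : ∀ i, IsSquare i → i ≤ len i + 3)
    (hε : ∀ ε : ℝ, 0 < ε → ∃ C : ℝ, 0 ≤ C ∧ ∀ i,
      |∑ t ∈ Finset.range (len i), h (startT len i + t)| ≤ ε * len i + C) :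
    Tendsto (fun n : ℕ => ((n+1:ℕ):ℝ)⁻¹ * ∑ t ∈ Finset.range (n+1), h t) atTop (𝓝 0) := by
  rw [Metric.tendsto_atTop]
  intro δ hδ
  obtain ⟨C, hC, hC'⟩ := hε (δ/4) (by positivity)
  have hS : ∀ i, |∑ t ∈ Finset.range (startT len i), h t| ≤ δ/4 * startT len i + C * i := by
    intro i
    induction i with
    | zero => simp [startT]
    | succ i ih =>
      rw [startT_succ, Finset.sum_range_add]
      refine (abs_add_le _ _).trans ?_
      push_cast
      linarith [hC' i]
  obtain ⟨B, hB⟩ := exists_nat_ge ((C + H*L)/(δ/4))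
  rw [div_le_iff₀ (by positivity)] at hB
  obtain ⟨I, hI⟩ := startT_superlinear len hlb B
  have hmono : Monotone (startT len) := monotone_nat_of_le_succ fun i => by
    rw [startT_succ]; omega
  have hge : ∀ i, i ≤ startT len i := by
    intro i
    induction i with
    | zero => simp
    | succ i ih => rw [startT_succ]; have := h1 i; omega
  refine ⟨startT len I, fun n hn => ?_⟩
  have hex : ∃ i, n + 1 < startT len i := ⟨n+2, hge (n+2)⟩
  classical
  obtain ⟨i, hi⟩ : ∃ i, Nat.find hex = i + 1 := by
    refine ⟨Nat.find hex - 1, ?_⟩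
    have : Nat.find hex ≠ 0 := by
      intro h0
      have := Nat.find_spec hex
      rw [h0] at this; simp [startT] at this
    omega
  have hi1 : startT len i ≤ n+1 := not_lt.1 (Nat.find_min hex (by omega))
  have hi2 : n + 1 < startT len (i+1) := hi ▸ Nat.find_spec hex
  have hIi : I ≤ i := by
    by_contra hc
    have := hmono (show i+1 ≤ I by omega)
    omega
  obtain ⟨d, hd⟩ := Nat.exists_eq_add_of_le hi1
  have hd2 : d ≤ len i := by rw [startT_succ] at hi2; omega
  have hsum : |∑ t ∈ Finset.range (n+1), h t| ≤ δ/4 * startT len i + C * i + H * d := by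
    rw [hd, Finset.sum_range_add]
    refine (abs_add_le _ _).trans (add_le_add (hS i) ?_)
    refine (Finset.abs_sum_le_sum_abs _ _).trans ?_
    refine (Finset.sum_le_sum fun t _ => hH _).trans ?_
    simp [mul_comm]
  have hd3 : (d:ℝ) ≤ L * ((i:ℝ)+1) := by exact_mod_cast hd2.trans (hub i)
  have hBi : (B:ℝ) * ((i:ℝ)+1) ≤ startT len i := by exact_mod_cast hI i hIi
  have hTn : (startT len i : ℝ) ≤ ((n+1:ℕ):ℝ) := by exact_mod_cast hi1
  have hN : (0:ℝ) < ((n+1:ℕ):ℝ) := by positivity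
  have hfin : |∑ t ∈ Finset.range (n+1), h t| ≤ δ/2 * ((n+1:ℕ):ℝ) := by
    have a1 : H * d ≤ H * (L * ((i:ℝ)+1)) := by gcongr
    have a2 : C * i ≤ C * ((i:ℝ)+1) := by gcongr; linarith
    have a3 : (C + H*L) * ((i:ℝ)+1) ≤ B * (δ/4) * ((i:ℝ)+1) := by gcongr
    have a4 : δ/4 * (B * ((i:ℝ)+1)) ≤ δ/4 * startT len i := by gcongr
    have a5 : δ/4 * (startT len i : ℝ) ≤ δ/4 * ((n+1:ℕ):ℝ) := by gcongr
    nlinarith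
  rw [Real.dist_eq, sub_zero, abs_mul, abs_of_pos (inv_pos.2 hN), inv_mul_lt_iff₀ hN]
  nlinarith

/-- Birkhoff sum along a word -/
def BS (h : ℝ → ℝ) : List (Fin 3) → ℝ → ℝ
  | [], _ => 0
  | j :: w, y => h (GW (j :: w) y) + BS h w y

lemma BS_append (h : ℝ → ℝ) (u w : List (Fin 3)) (y : ℝ) :
    BS h (u ++ w) y = BS h u (GW w y) + BS h w y := by
  induction u with
  | nil => simp [BS]
  | cons j u ih =>
    rw [List.cons_append]
    simp only [BS, ih]
    rw [← List.cons_append, GW_append]; ring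

lemma BS_eq (h : ℝ → ℝ) (w : List (Fin 3)) {y : ℝ} (hy : y ∈ Ioo (0:ℝ) 1) :
    ∑ t ∈ Finset.range w.length, h (theMap^[t] (GW w y)) = BS h w y := by
  induction w with
  | nil => simp [BS]
  | cons j w ih =>
    rw [List.length_cons, Finset.sum_range_succ', BS, ← ih, add_comm]
    congr 1
    apply Finset.sum_congr rfl
    intro t _
    rw [Function.iterate_succ_apply, GW_cons, theMap_g j (GW_mem' w hy)]

lemma BS_abs_le {h : ℝ → ℝ} {H : ℝ} (hH : ∀ y, |h y| ≤ H) (w : List (Fin 3)) (y : ℝ) :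
    |BS h w y| ≤ H * w.length := by
  induction w with
  | nil => simp [BS]
  | cons j w ih =>
    rw [BS, List.length_cons]
    refine (abs_add_le _ _).trans ?_
    push_cast
    linarith [hH (GW (j::w) y)]

lemma BS_sub (h : ℝ → ℝ) (c : ℝ) (w : List (Fin 3)) (y : ℝ) :
    BS (fun z => h z - c) w y = BS h w y - c * w.length := by
  induction w with
  | nil => simp [BS]
  | cons j w ih =>
    rw [BS, BS, ih, List.length_cons]; push_cast; ring

lemma BS_replicate {h : ℝ → ℝ} {M : ℝ} (hM0 : 0 ≤ M) (hM : ∀ y, |h y| ≤ M) {ε : ℝ} (hε : 0 < ε)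
    (j : Fin 3) {R : ℕ}
    (hR : ∀ r, R ≤ r → ∀ y ∈ Icc (0:ℝ) 1, |h (GW (List.replicate r j) y) - h (theFixedPts j)| ≤ ε)
    (a : ℕ) {y : ℝ} (hy : y ∈ Icc (0:ℝ) 1) :
    |BS h (List.replicate a j) y - a * h (theFixedPts j)| ≤ ε * a + 2 * M * R := by
  have key : |BS h (List.replicate a j) y - a * h (theFixedPts j)| ≤ ε * a + 2 * M * (min a R : ℕ) := by
    induction a with
    | zero => simp [BS]
    | succ a ih =>
      rw [List.replicate_succ, BS, ← List.replicate_succ]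
      have e : h (GW (List.replicate (a+1) j) y) + BS h (List.replicate a j) y
          - ((a+1:ℕ):ℝ) * h (theFixedPts j) =
          (h (GW (List.replicate (a+1) j) y) - h (theFixedPts j)) +
          (BS h (List.replicate a j) y - a * h (theFixedPts j)) := by push_cast; ring
      rw [e]
      refine (abs_add_le _ _).trans ?_
      rcases Nat.lt_or_ge a R with hlt | hge
      · rw [min_eq_left (by omega)]
        rw [min_eq_left (by omega)] at ih
        have := abs_sub (h (GW (List.replicate (a+1) j) y)) (h (theFixedPts j))
        have := hM (GW (List.replicate (a+1) j) y)
        have := hM (theFixedPts j)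
        push_cast
        nlinarith
      · rw [min_eq_right (by omega)]
        rw [min_eq_right (by omega)] at ih
        have := hR (a+1) (by omega) y hy
        push_cast
        nlinarith
  refine key.trans ?_
  have : ((min a R : ℕ):ℝ) ≤ R := by exact_mod_cast min_le_right a R
  have : 2 * M * (min a R : ℕ) ≤ 2 * M * R := by gcongr
  linarith

lemma exists_R {h : ℝ → ℝ} (hc : Continuous h) {ε : ℝ} (hε : 0 < ε) (j : Fin 3) : ∃ R : ℕ,
    ∀ r, R ≤ r → ∀ y ∈ Icc (0:ℝ) 1, |h (GW (List.replicate r j) y) - h (theFixedPts j)| ≤ ε := by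
  obtain ⟨δ, hδ, hδ'⟩ := Metric.continuous_iff.1 hc (theFixedPts j) ε hε
  obtain ⟨R, hR⟩ := exists_nat_gt (1/δ^2)
  refine ⟨R, fun r hr y hy => ?_⟩
  refine (hδ' _ ?_).le
  have h1 := replicate_close r j hy
  rw [Real.dist_eq]
  by_contra hcon
  push Not at hcon
  have h2 : δ^2 ≤ (GW (List.replicate r j) y - theFixedPts j)^2 := by
    rw [← sq_abs (GW _ _ - _)]; gcongr
  have h3 : (R:ℝ) ≤ r := by exact_mod_cast hr
  rw [div_lt_iff₀ (by positivity)] at hR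
  have h4 : (R:ℝ) * δ^2 ≤ r * (GW (List.replicate r j) y - theFixedPts j)^2 := by gcongr
  linarith

end Bas

namespace Bas

lemma phi_len_le {p : Fin 3 → ℝ} (hp : p ∈ simplexS) (i : ℕ) : (phi p i).length ≤ i := by
  unfold phi
  split_ifs
  · simp only [List.length_append, List.length_replicate]
    have hs := hp.2
    rw [Fin.sum_univ_three] at hs
    have hi : (0:ℝ) ≤ i := by positivity
    have f := fun j => Nat.floor_le (mul_nonneg (hp.1 j).1 hi)
    have : (⌊p 0 * i⌋₊ : ℝ) + (⌊p 1 * i⌋₊ + ⌊p 2 * i⌋₊) ≤ i := by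
      have e : p 0 * i + p 1 * i + p 2 * i = i := by rw [← add_mul, ← add_mul, hs, one_mul]
      linarith [f 0, f 1, f 2]
    exact_mod_cast this
  · simp

lemma phi_len_ge {p : Fin 3 → ℝ} (hp : p ∈ simplexS) (i : ℕ) (h : IsSquare i) :
    i ≤ (phi p i).length + 3 := by
  unfold phi
  rw [if_pos h]
  simp only [List.length_append, List.length_replicate]
  have hs := hp.2
  rw [Fin.sum_univ_three] at hs
  have f := fun j => (Nat.lt_floor_add_one (p j * (i:ℝ))).le
  have : (i:ℝ) ≤ (⌊p 0 * i⌋₊ : ℝ) + (⌊p 1 * i⌋₊ + ⌊p 2 * i⌋₊) + 3 := by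
    have e : p 0 * i + p 1 * i + p 2 * i = i := by rw [← add_mul, ← add_mul, hs, one_mul]
    linarith [f 0, f 1, f 2]
  exact_mod_cast this

lemma BS_phi {p : Fin 3 → ℝ} (hp : p ∈ simplexS) {h : ℝ → ℝ} (hc : Continuous h) {M : ℝ}
    (hM0 : 0 ≤ M) (hM : ∀ y, |h y| ≤ M) {ε : ℝ} (hε : 0 < ε) :
    ∃ C : ℝ, 0 ≤ C ∧ ∀ i, ∀ y ∈ Icc (0:ℝ) 1,
      |BS (fun z => h z - ∑ j, p j * h (theFixedPts j)) (phi p i) y| ≤ ε * (phi p i).length + C := by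
  choose R hR using fun j => exists_R hc hε j
  refine ⟨2*M*R 0 + 2*M*R 1 + 2*M*R 2 + 6*M, by positivity, fun i y hy => ?_⟩
  set c := ∑ j, p j * h (theFixedPts j) with hcdef
  rw [Fin.sum_univ_three] at hcdef
  have hs := hp.2
  rw [Fin.sum_univ_three] at hs
  have hp0 := fun j => hp.1 j
  have hcM : |c| ≤ M := by
    have a := fun j => abs_le.1 (hM (theFixedPts j))
    have a0 := a 0
    have a1 := a 1
    have a2 := a 2
    have e : M = p 0 * M + p 1 * M + p 2 * M := by rw [← add_mul, ← add_mul, hs, one_mul]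
    rw [abs_le, hcdef]
    constructor
    · nlinarith [mul_le_mul_of_nonneg_left a0.1 (hp0 0).1, mul_le_mul_of_nonneg_left a1.1 (hp0 1).1,
        mul_le_mul_of_nonneg_left a2.1 (hp0 2).1]
    · nlinarith [mul_le_mul_of_nonneg_left a0.2 (hp0 0).1, mul_le_mul_of_nonneg_left a1.2 (hp0 1).1,
        mul_le_mul_of_nonneg_left a2.2 (hp0 2).1]
  unfold phi
  split_ifs with hsq
  · rw [BS_sub, BS_append, BS_append]
    simp only [List.length_append, List.length_replicate]
    set y2 := y
    set y1 := GW (List.replicate ⌊p 2 * i⌋₊ 2) y with hy1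
    set y0 := GW (List.replicate ⌊p 1 * i⌋₊ 1 ++ List.replicate ⌊p 2 * i⌋₊ 2) y with hy0
    have b0 := BS_replicate hM0 hM hε 0 (hR 0) ⌊p 0 * i⌋₊ (y := y0) (GW_mem _ hy)
    have b1 := BS_replicate hM0 hM hε 1 (hR 1) ⌊p 1 * i⌋₊ (y := y1) (GW_mem _ hy)
    have b2 := BS_replicate hM0 hM hε 2 (hR 2) ⌊p 2 * i⌋₊ (y := y) hy
    have hi : (0:ℝ) ≤ i := by positivity
    have d : ∀ j, |((⌊p j * i⌋₊:ℝ) - p j * i) * (h (theFixedPts j) - c)| ≤ 2*M := by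
      intro j
      have f1 := Nat.floor_le (mul_nonneg (hp0 j).1 hi)
      have f2 := (Nat.lt_floor_add_one (p j * (i:ℝ))).le
      rw [abs_mul]
      have g1 : |(⌊p j * i⌋₊:ℝ) - p j * i| ≤ 1 := by rw [abs_le]; constructor <;> linarith
      have g2 : |h (theFixedPts j) - c| ≤ 2*M := by
        refine (abs_sub _ _).trans ?_
        linarith [hM (theFixedPts j)]
      calc _ ≤ 1 * (2*M) := mul_le_mul g1 g2 (abs_nonneg _) zero_le_one
        _ = _ := one_mul _
    have d0 := abs_le.1 (d 0)
    have d1 := abs_le.1 (d 1)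
    have d2 := abs_le.1 (d 2)
    have z : p 0 * i * (h (theFixedPts 0) - c) + p 1 * i * (h (theFixedPts 1) - c)
        + p 2 * i * (h (theFixedPts 2) - c) = 0 := by
      have e : p 0 * i * (h (theFixedPts 0) - c) + p 1 * i * (h (theFixedPts 1) - c)
        + p 2 * i * (h (theFixedPts 2) - c) =
        i * (p 0 * h (theFixedPts 0) + p 1 * h (theFixedPts 1) + p 2 * h (theFixedPts 2)
          - (p 0 + p 1 + p 2) * c) := by ring
      rw [e, hs, ← hcdef]; ring
    rw [abs_le] at b0 b1 b2 ⊢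
    push_cast
    constructor
    · linarith [b0.1, b1.1, b2.1, d0.1, d1.1, d2.1]
    · linarith [b0.2, b1.2, b2.2, d0.2, d1.2, d2.2]
  · simp [BS]; positivity

lemma orbit_avg {p : Fin 3 → ℝ} (hp : p ∈ simplexS) {u : ℕ → List (Fin 3)} {L : ℕ}
    (hL : ∀ i, (u i).length ≤ L) {x : ℕ → ℝ} (hx : ∀ i, x i ∈ Icc (0:ℝ) 1)
    (hxr : ∀ i, x i = GW (u i ++ ([1] ++ phi p i)) (x (i+1)))
    {h : ℝ → ℝ} (hc : Continuous h) {M : ℝ} (hM : ∀ y, |h y| ≤ M) :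
    Tendsto (fun n : ℕ => ((n+1:ℕ):ℝ)⁻¹ * ∑ t ∈ Finset.range (n+1),
      (h (theMap^[t] (x 0)) - ∑ j, p j * h (theFixedPts j))) atTop (𝓝 0) := by
  have hM0 : 0 ≤ M := (abs_nonneg _).trans (hM 0)
  have hxo : ∀ i, x i ∈ Ioo (0:ℝ) 1 := by
    intro i
    rw [hxr i, GW_append, GW_append]
    apply GW_mem'
    have := GW_one_mem (GW_mem (phi p i) (hx (i+1)))
    exact ⟨by linarith [this.1], by linarith [this.2]⟩
  set c := ∑ j, p j * h (theFixedPts j) with hcd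
  set ψ : ℕ → List (Fin 3) := fun i => u i ++ ([1] ++ phi p i) with hψ
  set len : ℕ → ℕ := fun i => (ψ i).length with hlen
  have hlen' : ∀ i, len i = (u i).length + (1 + (phi p i).length) := by
    intro i; simp [hlen, hψ]; omega
  have hT : ∀ i, theMap^[startT len i] (x 0) = x i := by
    intro i
    induction i with
    | zero => simp [startT]
    | succ i ih =>
      rw [startT_succ, add_comm, Function.iterate_add_apply, ih, hxr i]
      exact map_GW _ (hxo _)
  have hH : ∀ y, |h y - c| ≤ M + |c| := fun y =>
    (abs_sub _ _).trans (by linarith [hM y])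
  apply avg_tendsto (fun t => h (theMap^[t] (x 0)) - c) (M + |c|) (by positivity)
    (fun t => hH _) len (fun i => by rw [hlen']; omega) (L+1)
  · intro i
    rw [hlen']
    have := phi_len_le hp i
    have := hL i
    nlinarith
  · intro i hi
    rw [hlen']
    have := phi_len_ge hp i hi
    omega
  · intro ε hε
    obtain ⟨C, hC, hC'⟩ := BS_phi hp hc hM0 hM hε
    refine ⟨(M+|c|)*(L+1) + C, by positivity, fun i => ?_⟩
    have e : ∑ t ∈ Finset.range (len i), (h (theMap^[startT len i + t] (x 0)) - c) =
        BS (fun z => h z - c) (ψ i) (x (i+1)) := by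
      rw [← BS_eq (fun z => h z - c) (ψ i) (hxo (i+1))]
      apply Finset.sum_congr rfl
      intro t _
      rw [add_comm, Function.iterate_add_apply, hT, hxr i]
    rw [e, hψ]
    simp only
    rw [← List.append_assoc, BS_append]
    refine (abs_add_le _ _).trans ?_
    have b1 := BS_abs_le hH (u i ++ [1]) (GW (phi p i) (x (i+1)))
    have b2 := hC' i _ (hx (i+1))
    have b3 : ((u i ++ [1]).length:ℝ) ≤ L + 1 := by
      simp only [List.length_append, List.length_singleton]
      exact_mod_cast Nat.add_le_add_right (hL i) 1
    have b4 : (M+|c|) * (u i ++ [1]).length ≤ (M+|c|) * (L+1) := by gcongr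
    have b5 : ((phi p i).length:ℝ) ≤ len i := by exact_mod_cast (by rw [hlen']; omega)
    have b6 : ε * (phi p i).length ≤ ε * len i := by gcongr
    linarith

lemma weak_of_orbit {p : Fin 3 → ℝ} (hp : p ∈ simplexS) {u : ℕ → List (Fin 3)} {L : ℕ}
    (hL : ∀ i, (u i).length ≤ L) {x : ℕ → ℝ} (hx : ∀ i, x i ∈ Icc (0:ℝ) 1)
    (hxr : ∀ i, x i = GW (u i ++ ([1] ++ phi p i)) (x (i+1))) :
    WeakTendsto (fun n => empMeasure theMap (n + 1) (x 0)) (nuMeasure p) := by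
  intro h
  have key := orbit_avg hp hL hx hxr h.continuous (M := ‖h‖) (fun y => h.norm_coe_le_norm y)
  have hi : ∀ a : ℝ, Integrable (fun y => h y) (Measure.dirac a) := fun a => h.integrable _
  have e1 : ∫ y, h y ∂(nuMeasure p) = ∑ j, p j * h (theFixedPts j) := by
    unfold nuMeasure
    rw [integral_finsetSum_measure (fun j _ => (hi _).smul_measure ENNReal.ofReal_ne_top)]
    apply Finset.sum_congr rfl
    intro j _
    rw [integral_smul_measure, integral_dirac, ENNReal.toReal_ofReal (hp.1 j).1, smul_eq_mul]
  have e2 : ∀ n : ℕ, ∫ y, h y ∂(empMeasure theMap (n+1) (x 0)) =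
      ((n+1:ℕ):ℝ)⁻¹ * ∑ t ∈ Finset.range (n+1), h (theMap^[t] (x 0)) := by
    intro n
    unfold empMeasure
    rw [integral_smul_measure, integral_finsetSum_measure (fun j _ => hi _)]
    simp only [integral_dirac, ENNReal.toReal_inv, ENNReal.toReal_natCast, smul_eq_mul]
  have e3 := key.add_const (∑ j, p j * h (theFixedPts j))
  rw [zero_add] at e3
  rw [e1]
  refine e3.congr fun n => ?_
  rw [e2, Finset.sum_sub_distrib, Finset.sum_const, Finset.card_range, mul_sub, nsmul_eq_mul,
    ← mul_assoc, inv_mul_cancel₀ (by positivity)]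
  ring

lemma main {p : Fin 3 → ℝ} (hp : p ∈ simplexS) :
    dimH {x : ℝ | x ∈ Set.Icc (0:ℝ) 1 ∧
      WeakTendsto (fun n => empMeasure theMap (n + 1) x) (nuMeasure p)} = 1 := by
  apply le_antisymm
  · rw [← Real.dimH_univ]; exact dimH_mono (subset_univ _)
  · apply le_of_forall_lt_imp_le_of_dense
    intro a ha
    have ha' : a ≠ ⊤ := (ha.trans ENNReal.one_lt_top).ne
    rcases eq_or_ne a 0 with h0 | h0
    · rw [h0]; exact zero_le
    have hs : 0 < a.toReal := ENNReal.toReal_pos h0 ha'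
    have hs1 : a.toReal < 1 := by
      have := (ENNReal.toReal_lt_toReal ha' ENNReal.one_ne_top).2 ha
      simpa using this
    obtain ⟨b, w, X, hX, hXr, hd⟩ := dim_lower hp hs hs1
    rw [ENNReal.ofReal_toReal ha'] at hd
    refine hd.trans (dimH_mono ?_)
    rintro _ ⟨ω, rfl⟩
    refine ⟨hX ω 0, ?_⟩
    exact weak_of_orbit hp (u := fun i => w (ω i)) (L := ∑ d, (w d).length)
      (fun i => Finset.single_le_sum (f := fun d => (w d).length) (fun _ _ => Nat.zero_le _)
        (Finset.mem_univ (ω i))) (hX ω) (hXr ω)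

end Bas

/-- For every `p̄ ∈ S`, the basin of attraction
`𝒢(ν_p̄) = {x ∈ [0,1] : e_n(x) → ν_p̄ weakly*}` has Hausdorff dimension `1`. -/
theorem stmt0 (p : Fin 3 → ℝ) (hp : p ∈ simplexS) :
    dimH {x : ℝ | x ∈ Set.Icc (0:ℝ) 1 ∧
      WeakTendsto (fun n => empMeasure theMap (n + 1) x) (nuMeasure p)} = 1 := by
  exact Bas.main hp
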